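/- arXiv:2405.15653 — 3 statements merged into one kernel-verified Lean document; each statement's English description precedes it below -/
import Mathlib

section
/- Let X be a locally compact Hausdorff space, A and B C*-algebras, and E a C*-correspondence from A to B; in particular E is a nondegenerate Banach A-B-bimodule. Then C₀(X,E), the Banach space of norm-continuous E-valued functions on X vanishing at infinity with supremum norm, is a nondegenerate Banach C₀(X,A)-C₀(X,B)-bimodule under pointwise actions. Let C_b^str(X, M(E)) denote the set of bounded functions ξ : X → M(E) (values in the multiplier bimodule of E) that are strictly continuous, i.e. for all f ∈ C₀(X,A) and g ∈ C₀(X,B) the functions x ↦ f(x)·ξ(x) and x ↦ ξ(x)·g(x) belong to C₀(X,E). Then the map Θ sending ξ ∈ C_b^str(X, M(E)) to the pair of maps (f ↦ (x ↦ f(x)·ξ(x)), g ↦ (x ↦ ξ(x)·g(x))) is a well-defined multiplier of the bimodule C₀(X,E), and Θ is an isometric bijection of C_b^str(X, M(E)) onto M(C₀(X,E)) which is a bimodule map (with respect to the pointwise actions) and is the unique C₀(X,A)-C₀(X,B)-bimodule map extending the canonical embedding of C₀(X,E) into M(C₀(X,E)). -/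
/-!
STATEMENT 6: For a locally compact Hausdorff space `X` and a C*-correspondence `E` from
`A` to `B`, the space `C₀(X,E)` is a nondegenerate Banach `C₀(X,A)`-`C₀(X,B)`-bimodule
for the pointwise actions, and the bounded strictly continuous functions
`X → M(E)` are in isometric bijection with the multiplier bimodule `M(C₀(X,E))` via the
pointwise-action map `Θ`, which is the unique bimodule map extending the canonical
embedding of `C₀(X,E)` into `M(C₀(X,E))`.

Bimodule actions are encoded as continuous bilinear maps (`l a ξ = a·ξ`, `r b ξ = ξ·b`).
A multiplier of a bimodule `M` is a pair `(R,L)` of bounded linear maps with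
`a·L(b) = R(a)·b`; the multiplier bimodule is the set of such pairs inside the product
of operator spaces (whose norm is `max (‖R‖, ‖L‖)`), with actions
`a·(R,L) = (a₀ ↦ R(a₀a), b₀ ↦ a·L(b₀))`, `(R,L)·b = (a₀ ↦ R(a₀)·b, b₀ ↦ L(b·b₀))` and
canonical embedding `ι(ξ) = (a ↦ a·ξ, b ↦ ξ·b)`.  Positivity of inner products in the
C*-correspondence axioms is encoded via the C*-characterisation `⟨ξ,ξ⟩ = star c * c`.
Since the set of strictly continuous bounded functions carries no a priori algebraic
structure, module properties of maps defined on it are expressed pointwise.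
-/

open scoped ZeroAtInfty

namespace Stmt6

section BimoduleDefs

variable {R : Type*} {S : Type*} {M : Type*}
variable [NonUnitalNormedRing R] [NormedSpace ℂ R] [IsScalarTower ℂ R R] [SMulCommClass ℂ R R]
variable [NonUnitalNormedRing S] [NormedSpace ℂ S] [IsScalarTower ℂ S S] [SMulCommClass ℂ S S]
variable [NormedAddCommGroup M] [NormedSpace ℂ M]
variable (l : R →L[ℂ] M →L[ℂ] M) (r : S →L[ℂ] M →L[ℂ] M)

/-- `(l, r)` makes `M` a Banach `R`-`S`-bimodule. -/
structure IsBanachBimodule : Prop where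
  lsmul_mul : ∀ a a' ξ, l (a * a') ξ = l a (l a' ξ)
  rsmul_mul : ∀ b b' ξ, r (b * b') ξ = r b' (r b ξ)
  smul_comm : ∀ a b ξ, r b (l a ξ) = l a (r b ξ)
  norm_lsmul : ∀ a ξ, ‖l a ξ‖ ≤ ‖a‖ * ‖ξ‖
  norm_rsmul : ∀ b ξ, ‖r b ξ‖ ≤ ‖b‖ * ‖ξ‖

/-- The bimodule `M` is nondegenerate. -/
def NondegenerateBimodule : Prop :=
  closure (↑(Submodule.span ℂ {y : M | ∃ a ξ, l a ξ = y}) : Set M) = Set.univ ∧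
    closure (↑(Submodule.span ℂ {y : M | ∃ b ξ, r b ξ = y}) : Set M) = Set.univ

/-- A multiplier of `M`: a pair `(R₀, L₀)` with `a·L₀(b) = R₀(a)·b`. -/
def IsMultiplier (p : (R →L[ℂ] M) × (S →L[ℂ] M)) : Prop :=
  ∀ a b, l a (p.2 b) = r b (p.1 a)

/-- The canonical map `ι : M → M(M)`. -/
noncomputable def iota (ξ : M) : (R →L[ℂ] M) × (S →L[ℂ] M) := (l.flip ξ, r.flip ξ)

/-- The left action of `R` on multiplier pairs. -/
noncomputable def aAct (a : R) (p : (R →L[ℂ] M) × (S →L[ℂ] M)) :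
    (R →L[ℂ] M) × (S →L[ℂ] M) :=
  (p.1.comp ((ContinuousLinearMap.mul ℂ R).flip a), (l a).comp p.2)

/-- The right action of `S` on multiplier pairs. -/
noncomputable def bAct (p : (R →L[ℂ] M) × (S →L[ℂ] M)) (b : S) :
    (R →L[ℂ] M) × (S →L[ℂ] M) :=
  ((r b).comp p.1, p.2.comp (ContinuousLinearMap.mul ℂ S b))

end BimoduleDefs

variable (X : Type*) [TopologicalSpace X] [LocallyCompactSpace X] [T2Space X]
variable {A B E : Type*} [NonUnitalCStarAlgebra A] [NonUnitalCStarAlgebra B]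
variable [NormedAddCommGroup E] [NormedSpace ℂ E] [CompleteSpace E]
variable (lE : A →L[ℂ] E →L[ℂ] E) (rE : B →L[ℂ] E →L[ℂ] E) (ip : E → E → B)

/-- `(lE, rE, ip)` makes `E` a C*-correspondence from `A` to `B`. -/
structure IsCStarCorrespondence : Prop where
  ip_add_right : ∀ ξ ζ η, ip ξ (ζ + η) = ip ξ ζ + ip ξ η
  ip_smul_right : ∀ (c : ℂ) ξ ζ, ip ξ (c • ζ) = c • ip ξ ζ
  ip_rsmul_right : ∀ ξ ζ b, ip ξ (rE b ζ) = ip ξ ζ * b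
  ip_star : ∀ ξ ζ, star (ip ξ ζ) = ip ζ ξ
  ip_nonneg : ∀ ξ, ∃ c, ip ξ ξ = star c * c
  ip_definite : ∀ ξ, ip ξ ξ = 0 → ξ = 0
  norm_eq : ∀ ξ, ‖ξ‖ = Real.sqrt ‖ip ξ ξ‖
  rsmul_mul : ∀ b b' ξ, rE (b * b') ξ = rE b' (rE b ξ)
  lsmul_mul : ∀ a a' ξ, lE (a * a') ξ = lE a (lE a' ξ)
  ip_lsmul : ∀ a ξ ζ, ip (lE a ξ) ζ = ip ξ (lE (star a) ζ)
  smul_comm : ∀ a b ξ, rE b (lE a ξ) = lE a (rE b ξ)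
  nondegenerate : closure (↑(Submodule.span ℂ {y : E | ∃ a ξ, lE a ξ = y}) : Set E) = Set.univ

/-- The set of bounded strictly continuous functions `X → M(E)`. -/
def Sstr : Set (X → (A →L[ℂ] E) × (B →L[ℂ] E)) :=
  {ξ | (∀ x, IsMultiplier lE rE (ξ x)) ∧ (∃ C : ℝ, ∀ x, ‖ξ x‖ ≤ C) ∧
    (∀ f : C₀(X, A), ∃ g : C₀(X, E), ∀ x, g x = (ξ x).1 (f x)) ∧
    ∀ h : C₀(X, B), ∃ g : C₀(X, E), ∀ x, g x = (ξ x).2 (h x)}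

variable {X lE rE}

/-- `Θ : C_b^str(X, M(E)) → M(C₀(X,E))` is a `C₀(X,A)`-`C₀(X,B)`-bimodule map (with
respect to the pointwise module structure of the domain and the actions `lC`, `rC`). -/
def IsBimoduleMap (lC : C₀(X, A) →L[ℂ] C₀(X, E) →L[ℂ] C₀(X, E))
    (rC : C₀(X, B) →L[ℂ] C₀(X, E) →L[ℂ] C₀(X, E))
    (Θ : ↥(Sstr X lE rE) → (C₀(X, A) →L[ℂ] C₀(X, E)) × (C₀(X, B) →L[ℂ] C₀(X, E))) : Prop :=
  (∀ ξ ξ' ξ'' : ↥(Sstr X lE rE), (∀ x, ξ''.val x = ξ.val x + ξ'.val x) →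
    Θ ξ'' = Θ ξ + Θ ξ') ∧
  (∀ (z : ℂ) (ξ ξ' : ↥(Sstr X lE rE)), (∀ x, ξ'.val x = z • ξ.val x) → Θ ξ' = z • Θ ξ) ∧
  (∀ (f : C₀(X, A)) (ξ ξ' : ↥(Sstr X lE rE)),
    (∀ x, ξ'.val x = aAct lE (f x) (ξ.val x)) → Θ ξ' = aAct lC f (Θ ξ)) ∧
  ∀ (h : C₀(X, B)) (ξ ξ' : ↥(Sstr X lE rE)),
    (∀ x, ξ'.val x = bAct rE (ξ.val x) (h x)) → Θ ξ' = bAct rC (Θ ξ) h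

/-- The restriction of `Θ` along the inclusion `C₀(X,E) ⊆ C_b^str(X, M(E))` is the
canonical embedding `C₀(X,E) → M(C₀(X,E))`. -/
def ExtendsEmbedding (lC : C₀(X, A) →L[ℂ] C₀(X, E) →L[ℂ] C₀(X, E))
    (rC : C₀(X, B) →L[ℂ] C₀(X, E) →L[ℂ] C₀(X, E))
    (Θ : ↥(Sstr X lE rE) → (C₀(X, A) →L[ℂ] C₀(X, E)) × (C₀(X, B) →L[ℂ] C₀(X, E))) : Prop :=
  ∀ (g : C₀(X, E)) (ξ : ↥(Sstr X lE rE)),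
    (∀ x, ξ.val x = iota lE rE (g x)) → Θ ξ = iota lC rC g

variable (X lE rE)

/-!
Let `ρ : X → V →L[ℂ] W` be a field of operators.  Evaluating at a point after extending a vector
to a function by a bump shows that `f ↦ (x ↦ ρ x (f x))` has norm `⨆ x, ‖ρ x‖`, and that the
operators `C₀(X, V) → C₀(X, W)` of this form are exactly the local ones, i.e. those with
`R f x = 0` whenever `f x = 0`.  If `(R, L)` is a multiplier of `C₀(X, E)` and `f x = 0`, then
`R f x · h x = f x · L h x = 0` for all `h`, so `R` is local as soon as `B` separates vectors of
`E`; the same works for `L`.  Hence multipliers of `C₀(X, E)` are fields of multipliers of `E`.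

For uniqueness, `a·(R, L) = ι(R a)`, so any bimodule map extending the embedding agrees with `Θ`
after multiplication by `C₀(X, A)`, and a multiplier is determined by these products.

Nondegeneracy of `C₀(X, E)` follows from a partition of unity argument: a `C₀(X)`-submodule of
`C₀(X, W)` with dense fibres is dense.
-/

section Multiplier

variable {R S M : Type*}
variable [NonUnitalNormedRing R] [NormedSpace ℂ R] [NonUnitalNormedRing S] [NormedSpace ℂ S]
variable [NormedAddCommGroup M] [NormedSpace ℂ M]
variable {l : R →L[ℂ] M →L[ℂ] M} {r : S →L[ℂ] M →L[ℂ] M}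
variable {m m' : (R →L[ℂ] M) × (S →L[ℂ] M)}

/-- The module is without order: only the vector `0` is annihilated by the whole algebra. Left and
right actions are both passed as bilinear maps. -/
def SeparatesVectors {V W : Type*} [NormedAddCommGroup V] [NormedSpace ℂ V]
    [NormedAddCommGroup W] [NormedSpace ℂ W] (l : V →L[ℂ] W →L[ℂ] W) : Prop :=
  ∀ ξ, (∀ a, l a ξ = 0) → ξ = 0

theorem SeparatesVectors.ext {V W : Type*} [NormedAddCommGroup V] [NormedSpace ℂ V]
    [NormedAddCommGroup W] [NormedSpace ℂ W] {l : V →L[ℂ] W →L[ℂ] W} (hl : SeparatesVectors l)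
    {ξ ζ : W} (h : ∀ a, l a ξ = l a ζ) : ξ = ζ :=
  sub_eq_zero.1 <| hl _ fun a => by rw [map_sub, h, sub_self]

theorem IsBanachBimodule.isMultiplier_iota (hM : IsBanachBimodule l r) (ξ : M) :
    IsMultiplier l r (iota l r ξ) :=
  fun a b => (hM.smul_comm a b ξ).symm

theorem IsMultiplier.fst_mul (hm : IsMultiplier l r m) (hM : IsBanachBimodule l r)
    (hr : SeparatesVectors r) (a a' : R) : m.1 (a * a') = l a (m.1 a') := by
  refine hr.ext fun b => ?_
  calc r b (m.1 (a * a')) = l a (l a' (m.2 b)) := by rw [← hm, hM.lsmul_mul]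
    _ = r b (l a (m.1 a')) := by rw [hm, hM.smul_comm]

variable [IsScalarTower ℂ R R] [SMulCommClass ℂ R R]

theorem IsMultiplier.aAct_eq_iota (hm : IsMultiplier l r m) (hM : IsBanachBimodule l r)
    (hr : SeparatesVectors r) (a : R) : aAct l a m = iota l r (m.1 a) :=
  Prod.ext (ContinuousLinearMap.ext fun a' => hm.fst_mul hM hr a' a)
    (ContinuousLinearMap.ext fun b => hm a b)

theorem IsMultiplier.eq_of_aAct_eq (hm : IsMultiplier l r m) (hm' : IsMultiplier l r m')
    (hl : SeparatesVectors l) (hr : SeparatesVectors r) (h : ∀ a, aAct l a m = aAct l a m') :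
    m = m' := by
  have smul_snd_eq (a : R) (b : S) : l a (m.2 b) = l a (m'.2 b) :=
    DFunLike.congr_fun (congrArg Prod.snd (h a)) b
  refine Prod.ext (ContinuousLinearMap.ext fun a => hr.ext fun b => ?_)
    (ContinuousLinearMap.ext fun b => hl.ext fun a => smul_snd_eq a b)
  rw [← hm, ← hm', smul_snd_eq]

end Multiplier

section ApproximateUnit

open Filter Topology

variable {V W : Type*} [NormedAddCommGroup V] [NormedSpace ℂ V]
variable [NormedAddCommGroup W] [NormedSpace ℂ W]

theorem tendsto_apply_of_mem_span {l : V →L[ℂ] W →L[ℂ] W} {F : Filter V}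
    (h : ∀ a ξ, Tendsto (fun e => l e (l a ξ)) F (𝓝 (l a ξ))) {ζ : W}
    (hζ : ζ ∈ Submodule.span ℂ {y : W | ∃ a ξ, l a ξ = y}) :
    Tendsto (fun e => l e ζ) F (𝓝 ζ) := by
  induction hζ using Submodule.span_induction with
  | mem y hy =>
    obtain ⟨a, ξ, rfl⟩ := hy
    exact h a ξ
  | zero => simpa using tendsto_const_nhds
  | add x y _ _ hx hy => simpa using hx.add hy
  | smul c x _ hx => simpa using hx.const_smul c

theorem separatesVectors_of_dense_span {l : V →L[ℂ] W →L[ℂ] W} {F : Filter V} [F.NeBot] {C : ℝ}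
    (hF : ∀ᶠ e in F, ‖e‖ ≤ C) (h : ∀ a ξ, Tendsto (fun e => l e (l a ξ)) F (𝓝 (l a ξ)))
    (hd : Dense (Submodule.span ℂ {y : W | ∃ a ξ, l a ξ = y} : Set W)) : SeparatesVectors l := by
  intro ξ hξ
  -- For `ζ` in the span, `ζ = lim e·ζ = lim e·(ζ - ξ)`.
  have norm_le_of_mem_span : ∀ ζ ∈ Submodule.span ℂ {y : W | ∃ a ξ, l a ξ = y},
      ‖ζ‖ ≤ ‖l‖ * C * ‖ζ - ξ‖ := fun ζ hζ => by
    refine le_of_tendsto (tendsto_apply_of_mem_span h hζ).norm (hF.mono fun e he => ?_)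
    calc ‖l e ζ‖ = ‖l e (ζ - ξ)‖ := by rw [map_sub, hξ, sub_zero]
      _ ≤ ‖l‖ * C * ‖ζ - ξ‖ := (l e).le_of_opNorm_le (l.le_opNorm_of_le he) _
  have hclosed : IsClosed {ζ : W | ‖ζ‖ ≤ ‖l‖ * C * ‖ζ - ξ‖} :=
    isClosed_le (by fun_prop) (by fun_prop)
  have norm_le : ‖ξ‖ ≤ ‖l‖ * C * ‖ξ - ξ‖ := closure_minimal norm_le_of_mem_span hclosed (hd ξ)
  simpa using norm_le

end ApproximateUnit

section ApproximateUnitBimodule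

open Filter Topology

variable {R S M : Type*}
variable [NonUnitalNormedRing R] [NormedSpace ℂ R] [NonUnitalNormedRing S] [NormedSpace ℂ S]
variable [NormedAddCommGroup M] [NormedSpace ℂ M]
variable {l : R →L[ℂ] M →L[ℂ] M} {r : S →L[ℂ] M →L[ℂ] M} {C : ℝ}

theorem IsBanachBimodule.separatesVectors_left (hM : IsBanachBimodule l r)
    (hnd : NondegenerateBimodule l r) {F : Filter R} (hF : F.IsApproximateUnit)
    (hC : ∀ᶠ e in F, ‖e‖ ≤ C) : SeparatesVectors l := by
  have := hF.neBot
  refine separatesVectors_of_dense_span hC (fun a ξ => ?_) (dense_iff_closure_eq.2 hnd.1)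
  simp only [← hM.lsmul_mul]
  exact ((l.flip ξ).continuous.tendsto a).comp (hF.tendsto_mul_right a)

theorem IsBanachBimodule.separatesVectors_right (hM : IsBanachBimodule l r)
    (hnd : NondegenerateBimodule l r) {F : Filter S} (hF : F.IsApproximateUnit)
    (hC : ∀ᶠ e in F, ‖e‖ ≤ C) : SeparatesVectors r := by
  have := hF.neBot
  refine separatesVectors_of_dense_span hC (fun b ξ => ?_) (dense_iff_closure_eq.2 hnd.2)
  simp only [← hM.rsmul_mul]
  exact ((r.flip ξ).continuous.tendsto b).comp (hF.tendsto_mul_left b)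

end ApproximateUnitBimodule

section ZeroAtInfty

open Filter

variable {X V W Z : Type*} [TopologicalSpace X] [NormedAddCommGroup V] [NormedSpace ℂ V]
variable [NormedAddCommGroup W] [NormedSpace ℂ W] [NormedAddCommGroup Z] [NormedSpace ℂ Z]

theorem norm_apply_le_norm {W : Type*} [NormedAddCommGroup W] (g : C₀(X, W)) (x : X) :
    ‖g x‖ ≤ ‖g‖ :=
  g.toBCF.norm_coe_le_norm x

theorem norm_le_iff_forall_norm_apply_le {W : Type*} [NormedAddCommGroup W] {g : C₀(X, W)} {C : ℝ}
    (hC : 0 ≤ C) : ‖g‖ ≤ C ↔ ∀ x, ‖g x‖ ≤ C :=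
  BoundedContinuousFunction.norm_le (f := g.toBCF) hC

/-- Evaluation at a point as a continuous linear map on `C₀(X, W)`. -/
noncomputable def evalCLM (W : Type*) [NormedAddCommGroup W] [NormedSpace ℂ W] (x : X) :
    C₀(X, W) →L[ℂ] W :=
  LinearMap.mkContinuous
    { toFun g := g x
      map_add' _ _ := rfl
      map_smul' _ _ := rfl } 1 fun g => by simpa using norm_apply_le_norm g x

@[simp] theorem evalCLM_apply (x : X) (g : C₀(X, W)) : evalCLM W x g = g x := rfl

/-- The elementary tensors `φ ⊗ w : x ↦ φ x • w` with a fixed `φ`, as a continuous linear map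
in `w`. -/
noncomputable def tensorCLM (W : Type*) [NormedAddCommGroup W] [NormedSpace ℂ W]
    (φ : C₀(X, ℂ)) : W →L[ℂ] C₀(X, W) :=
  LinearMap.mkContinuous
    { toFun w :=
        { toFun x := φ x • w
          continuous_toFun := (map_continuous φ).smul continuous_const
          zero_at_infty' := by simpa using (zero_at_infty φ).smul_const w }
      map_add' v w := ZeroAtInftyContinuousMap.ext fun x => smul_add (φ x) v w
      map_smul' c w := ZeroAtInftyContinuousMap.ext fun x => smul_comm (φ x) c w } ‖φ‖ fun w =>
    (norm_le_iff_forall_norm_apply_le (by positivity)).2 fun x =>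
      (norm_smul_le _ _).trans (by gcongr; exact norm_apply_le_norm φ x)

@[simp] theorem tensorCLM_apply (φ : C₀(X, ℂ)) (w : W) (x : X) : tensorCLM W φ w x = φ x • w :=
  rfl

theorem norm_tensorCLM_le (φ : C₀(X, ℂ)) : ‖tensorCLM W φ‖ ≤ ‖φ‖ :=
  LinearMap.mkContinuous_norm_le _ (norm_nonneg φ) _

/-- The bilinear map `C₀(X, V) × C₀(X, W) → C₀(X, Z)` obtained by applying a bilinear map
`V × W → Z` pointwise; for an action it is the pointwise action. -/
noncomputable def pointwise (X : Type*) [TopologicalSpace X] (l : V →L[ℂ] W →L[ℂ] Z) :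
    C₀(X, V) →L[ℂ] C₀(X, W) →L[ℂ] C₀(X, Z) :=
  LinearMap.mkContinuous₂
    (LinearMap.mk₂ ℂ
      (fun f g =>
        { toFun x := l (f x) (g x)
          continuous_toFun := by
            have hf := map_continuous f
            have hg := map_continuous g
            fun_prop
          zero_at_infty' := by
            have hl : Continuous fun p : V × W => l p.1 p.2 := by fun_prop
            simpa [Function.comp_def] using
              (hl.tendsto (0, 0)).comp ((zero_at_infty f).prodMk_nhds (zero_at_infty g)) })
      (fun f f' g => by ext x; simp)
      (fun c f g => by ext x; simp)
      (fun f g g' => by ext x; simp)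
      (fun c f g => by ext x; simp)) ‖l‖ fun f g => by
    have : 0 ≤ ‖l‖ := l.opNorm_nonneg
    refine (norm_le_iff_forall_norm_apply_le (by positivity)).2 fun x =>
      (l.le_opNorm₂ (f x) (g x)).trans ?_
    gcongr
    exacts [norm_apply_le_norm f x, norm_apply_le_norm g x]

@[simp] theorem pointwise_apply (l : V →L[ℂ] W →L[ℂ] Z) (f : C₀(X, V)) (g : C₀(X, W)) (x : X) :
    pointwise X l f g x = l (f x) (g x) :=
  rfl

theorem norm_pointwise_apply_le {l : V →L[ℂ] W →L[ℂ] Z}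
    (hl : ∀ v w, ‖l v w‖ ≤ ‖v‖ * ‖w‖) (f : C₀(X, V)) (g : C₀(X, W)) :
    ‖pointwise X l f g‖ ≤ ‖f‖ * ‖g‖ := by
  refine (norm_le_iff_forall_norm_apply_le (by positivity)).2 fun x => (hl _ _).trans ?_
  gcongr
  exacts [norm_apply_le_norm f x, norm_apply_le_norm g x]

/-- A compactly supported real function as an element of `C₀(X, ℂ)`. -/
def ofRealOfCompactSupport (f : C(X, ℝ)) (hf : HasCompactSupport f) : C₀(X, ℂ) where
  toFun x := f x
  continuous_toFun := Complex.continuous_ofReal.comp f.continuous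
  zero_at_infty' := (hf.comp_left Complex.ofReal_zero).is_zero_at_infty

@[simp] theorem ofRealOfCompactSupport_apply (f : C(X, ℝ)) (hf : HasCompactSupport f) (x : X) :
    ofRealOfCompactSupport f hf x = f x :=
  rfl

theorem exists_isCompact_forall_notMem_norm_lt {W : Type*} [NormedAddCommGroup W]
    (g : C₀(X, W)) {ε : ℝ} (hε : 0 < ε) : ∃ K, IsCompact K ∧ ∀ x ∉ K, ‖g x‖ < ε := by
  have hev : ∀ᶠ x in cocompact X, ‖g x‖ < ε := by
    simpa using Metric.tendsto_nhds.1 (zero_at_infty g) ε hε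
  obtain ⟨K, hK, hKg⟩ := mem_cocompact.1 hev
  exact ⟨K, hK, fun x hx => hKg hx⟩

variable [LocallyCompactSpace X] [T2Space X]

theorem exists_apply_eq_one_norm_le_one (x : X) : ∃ φ : C₀(X, ℂ), φ x = 1 ∧ ‖φ‖ ≤ 1 := by
  obtain ⟨f, hfx, -, hfc, hf01⟩ := exists_continuous_one_zero_of_isCompact
    (isCompact_singleton (x := x)) isClosed_empty (Set.disjoint_empty _)
  refine ⟨ofRealOfCompactSupport f hfc, ?_, ?_⟩
  · simpa using hfx rfl
  · refine (norm_le_iff_forall_norm_apply_le zero_le_one).2 fun y => ?_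
    simpa [abs_of_nonneg (hf01 y).1] using (hf01 y).2

theorem exists_section_evalCLM (V : Type*) [NormedAddCommGroup V] [NormedSpace ℂ V] (x : X) :
    ∃ s : V →L[ℂ] C₀(X, V), (∀ v, s v x = v) ∧ ‖s‖ ≤ 1 := by
  obtain ⟨φ, hφx, hφ⟩ := exists_apply_eq_one_norm_le_one x
  exact ⟨tensorCLM V φ, fun v => by simp [hφx], (norm_tensorCLM_le φ).trans hφ⟩

theorem exists_zeroAtInfty_apply_eq (x : X) (v : V) : ∃ f : C₀(X, V), f x = v :=
  let ⟨s, hs, _⟩ := exists_section_evalCLM V x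
  ⟨s v, hs v⟩

end ZeroAtInfty

section Density

variable {X V W : Type*} [TopologicalSpace X]
variable [NormedAddCommGroup V] [NormedSpace ℂ V] [NormedAddCommGroup W] [NormedSpace ℂ W]

theorem norm_sum_smul_sub_le {ι F : Type*} [Fintype ι] [NormedAddCommGroup F] [NormedSpace ℝ F]
    {c : ι → ℝ} {v : ι → F} {w : F} {δ ε : ℝ} (hε : 0 ≤ ε) (hc : ∀ i, 0 ≤ c i)
    (hsum : ∑ i, c i ≤ 1) (hv : ∀ i, c i ≠ 0 → ‖v i - w‖ ≤ ε)
    (hw : (1 - ∑ i, c i) * ‖w‖ ≤ δ) : ‖∑ i, c i • v i - w‖ ≤ ε + δ := by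
  have smul_sub_le (i : ι) : ‖c i • (v i - w)‖ ≤ c i * ε := by
    rw [norm_smul, Real.norm_of_nonneg (hc i)]
    rcases eq_or_ne (c i) 0 with hi | hi
    · simp [hi]
    · exact mul_le_mul_of_nonneg_left (hv i hi) (hc i)
  calc ‖∑ i, c i • v i - w‖ = ‖∑ i, c i • (v i - w) - (1 - ∑ i, c i) • w‖ := by
        simp only [smul_sub, Finset.sum_sub_distrib, sub_smul, one_smul, Finset.sum_smul]
        abel_nf
    _ ≤ (∑ i, c i) * ε + (1 - ∑ i, c i) * ‖w‖ := by
        refine (norm_sub_le _ _).trans (add_le_add ?_ ?_)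
        · exact (norm_sum_le_of_le _ fun i _ => smul_sub_le i).trans_eq (Finset.sum_mul ..).symm
        · rw [norm_smul, Real.norm_of_nonneg (sub_nonneg.2 hsum)]
    _ ≤ ε + δ := add_le_add (mul_le_of_le_one_left hε hsum) hw

theorem dist_partition_sum_le {ι : Type*} [Fintype ι] {K : Set X} (φ : PartitionOfUnity ι X K)
    (hφ : ∀ i, HasCompactSupport (φ i)) {g : C₀(X, W)} {n : ι → C₀(X, W)} {δ ε : ℝ} (hε : 0 ≤ ε)
    (hδ : 0 ≤ δ) (hn : ∀ i x, φ i x ≠ 0 → ‖n i x - g x‖ ≤ ε) (hg : ∀ x ∉ K, ‖g x‖ ≤ δ) :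
    ‖∑ i, pointwise X (ContinuousLinearMap.lsmul ℂ ℂ) (ofRealOfCompactSupport (φ i) (hφ i)) (n i)
      - g‖ ≤ ε + δ := by
  refine (norm_le_iff_forall_norm_apply_le (by positivity)).2 fun x => ?_
  have hsum : ∑ i, φ i x ≤ 1 := by
    simpa only [finsum_eq_sum_of_fintype] using φ.sum_le_one x
  have hrest : (1 - ∑ i, φ i x) * ‖g x‖ ≤ δ := by
    by_cases hx : x ∈ K
    · have : ∑ i, φ i x = 1 := by
        simpa only [finsum_eq_sum_of_fintype] using φ.sum_eq_one hx
      simpa [this] using hδ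
    · refine (mul_le_of_le_one_left (norm_nonneg _) ?_).trans (hg x hx)
      exact sub_le_self _ (Finset.sum_nonneg fun i _ => φ.nonneg i x)
  have happly : (∑ i, pointwise X (ContinuousLinearMap.lsmul ℂ ℂ)
      (ofRealOfCompactSupport (φ i) (hφ i)) (n i) - g) x = ∑ i, φ i x • n i x - g x := by
    rw [← evalCLM_apply, map_sub, map_sum]
    simp
  rw [happly]
  exact norm_sum_smul_sub_le hε (fun i => φ.nonneg i x) hsum (fun i => hn i x) hrest

variable [LocallyCompactSpace X] [T2Space X]

theorem dense_of_forall_dense_map_evalCLM (N : Submodule ℂ C₀(X, W))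
    (hsmul : ∀ (φ : C₀(X, ℂ)), ∀ n ∈ N, pointwise X (ContinuousLinearMap.lsmul ℂ ℂ) φ n ∈ N)
    (hN : ∀ x, Dense (N.map (evalCLM W x).toLinearMap : Set W)) :
    Dense (N : Set C₀(X, W)) := by
  intro g
  refine Metric.mem_closure_iff.2 fun ε hε => ?_
  obtain ⟨K, hK, hgK⟩ := exists_isCompact_forall_notMem_norm_lt g (half_pos (half_pos hε))
  have exists_near (x : X) : ∃ n ∈ N, ‖n x - g x‖ < ε / 2 := by
    obtain ⟨_, ⟨n, hn, rfl⟩, hnx⟩ := Metric.mem_closure_iff.1 (hN x (g x)) _ (half_pos hε)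
    exact ⟨n, hn, by simpa [dist_eq_norm'] using hnx⟩
  choose n hnN hn using exists_near
  have hopen (x : X) : IsOpen {y | ‖n x y - g y‖ < ε / 2} :=
    isOpen_lt (by fun_prop) continuous_const
  obtain ⟨t, ht⟩ := hK.elim_finite_subcover _ hopen fun x _ => Set.mem_iUnion.2 ⟨x, hn x⟩
  obtain ⟨φ, hφsub, hφc⟩ := PartitionOfUnity.exists_isSubordinate_of_locallyFinite_t2space hK
    (fun x : t => {y | ‖n x y - g y‖ < ε / 2}) (fun x => hopen x) (locallyFinite_of_finite _)
    (by simpa only [Set.iUnion_subtype] using ht)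
  refine ⟨_, N.sum_mem fun i (_ : i ∈ Finset.univ) =>
    hsmul (ofRealOfCompactSupport (φ i) (hφc i)) _ (hnN i), ?_⟩
  rw [dist_eq_norm']
  refine (dist_partition_sum_le φ hφc (half_pos hε).le (half_pos (half_pos hε)).le
    (fun i x hx => (hφsub i (subset_closure hx)).le) fun x hx => (hgK x hx).le).trans_lt ?_
  linarith

theorem dense_span_pointwise {Z : Type*} [NormedAddCommGroup Z] [NormedSpace ℂ Z]
    {l : V →L[ℂ] W →L[ℂ] Z} (hl : Dense (Submodule.span ℂ {y : Z | ∃ a ξ, l a ξ = y} : Set Z)) :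
    Dense (Submodule.span ℂ {y : C₀(X, Z) | ∃ f g, pointwise X l f g = y} : Set C₀(X, Z)) := by
  refine dense_of_forall_dense_map_evalCLM _ (fun φ n hn => ?_) fun x => hl.mono ?_
  · induction hn using Submodule.span_induction with
    | mem y hy =>
      obtain ⟨f, g, rfl⟩ := hy
      refine Submodule.subset_span ⟨pointwise X (ContinuousLinearMap.lsmul ℂ ℂ) φ f, g, ?_⟩
      ext x
      simp
    | zero => simp
    | add y z _ _ hy hz => simpa using add_mem hy hz
    | smul c y _ hy => simpa using Submodule.smul_mem _ c hy
  · rw [Submodule.map_span]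
    refine Submodule.span_mono ?_
    rintro _ ⟨a, ξ, rfl⟩
    obtain ⟨f, rfl⟩ := exists_zeroAtInfty_apply_eq x a
    obtain ⟨g, rfl⟩ := exists_zeroAtInfty_apply_eq x ξ
    exact ⟨_, ⟨f, g, rfl⟩, rfl⟩

end Density

section StrictField

variable {X V W : Type*} [TopologicalSpace X]
variable [NormedAddCommGroup V] [NormedSpace ℂ V] [NormedAddCommGroup W] [NormedSpace ℂ W]

/-- A bounded strictly continuous field of operators: the one-sided version of `C_b^str`, in which
`ρ` is bounded and its pointwise application maps `C₀(X, V)` to `C₀(X, W)`. -/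
structure IsStrictField (ρ : X → V →L[ℂ] W) : Prop where
  bounded : ∃ C : ℝ, ∀ x, ‖ρ x‖ ≤ C
  exists_apply_eq : ∀ f : C₀(X, V), ∃ g : C₀(X, W), ∀ x, g x = ρ x (f x)

/-- The operator `f ↦ (x ↦ ρ x (f x))` given by a bounded strictly continuous field `ρ`. -/
noncomputable def IsStrictField.toCLM {ρ : X → V →L[ℂ] W} (hρ : IsStrictField ρ) :
    C₀(X, V) →L[ℂ] C₀(X, W) :=
  have spec (f : C₀(X, V)) := (hρ.exists_apply_eq f).choose_spec
  LinearMap.mkContinuous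
    { toFun f := (hρ.exists_apply_eq f).choose
      map_add' f g := by
        ext x
        rw [ZeroAtInftyContinuousMap.add_apply, spec, spec, spec,
          ZeroAtInftyContinuousMap.add_apply, map_add]
      map_smul' c f := by
        ext x
        rw [ZeroAtInftyContinuousMap.smul_apply, spec, RingHom.id_apply, spec,
          ZeroAtInftyContinuousMap.smul_apply, map_smul] } |hρ.bounded.choose| fun f =>
    (norm_le_iff_forall_norm_apply_le (by positivity)).2 fun x => (spec f x).symm ▸
      (ρ x).le_of_opNorm_le_of_le ((hρ.bounded.choose_spec x).trans (le_abs_self _))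
        (norm_apply_le_norm f x)

@[simp] theorem IsStrictField.toCLM_apply {ρ : X → V →L[ℂ] W} (hρ : IsStrictField ρ)
    (f : C₀(X, V)) (x : X) : hρ.toCLM f x = ρ x (f x) :=
  (hρ.exists_apply_eq f).choose_spec x

variable [LocallyCompactSpace X] [T2Space X] {R : C₀(X, V) →L[ℂ] C₀(X, W)} {ρ ρ' : X → V →L[ℂ] W}

theorem eq_of_forall_apply_eq (h : ∀ (f : C₀(X, V)) x, ρ x (f x) = ρ' x (f x)) : ρ = ρ' := by
  ext x v
  obtain ⟨f, rfl⟩ := exists_zeroAtInfty_apply_eq x v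
  exact h f x

theorem norm_le_iff_forall_norm_field_le (h : ∀ f x, R f x = ρ x (f x)) {C : ℝ} (hC : 0 ≤ C) :
    ‖R‖ ≤ C ↔ ∀ x, ‖ρ x‖ ≤ C := by
  refine ⟨fun hR x => ?_, fun hρ => R.opNorm_le_bound hC fun f => ?_⟩
  · obtain ⟨s, hsx, hs⟩ := exists_section_evalCLM V x
    refine (ρ x).opNorm_le_bound hC fun v => ?_
    calc ‖ρ x v‖ = ‖R (s v) x‖ := by rw [h, hsx]
      _ ≤ ‖R (s v)‖ := norm_apply_le_norm _ x
      _ ≤ C * ‖v‖ := R.le_of_opNorm_le_of_le hR (by simpa using s.le_of_opNorm_le hs v)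
  · refine (norm_le_iff_forall_norm_apply_le (by positivity)).2 fun x => ?_
    rw [h]
    exact (ρ x).le_of_opNorm_le_of_le (hρ x) (norm_apply_le_norm f x)

theorem IsStrictField.of_forall_apply_eq (h : ∀ f x, R f x = ρ x (f x)) : IsStrictField ρ where
  bounded := ⟨‖R‖, (norm_le_iff_forall_norm_field_le h R.opNorm_nonneg).1 le_rfl⟩
  exists_apply_eq f := ⟨R f, h f⟩

theorem exists_forall_apply_eq_of_local (hR : ∀ f x, f x = 0 → R f x = 0) :
    ∃ ρ : X → V →L[ℂ] W, ∀ f x, R f x = ρ x (f x) := by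
  choose s hs _ using exists_section_evalCLM (X := X) V
  refine ⟨fun x => evalCLM W x ∘L R ∘L s x, fun f x => ?_⟩
  have hsub : R (f - s x (f x)) x = 0 := hR _ x (by simp [hs])
  simpa [sub_eq_zero] using hsub

end StrictField

section PointwiseBimodule

variable {X R S M : Type*} [TopologicalSpace X]
variable [NonUnitalNormedRing R] [NormedSpace ℂ R] [NonUnitalNormedRing S] [NormedSpace ℂ S]
variable [NormedAddCommGroup M] [NormedSpace ℂ M]
variable {l : R →L[ℂ] M →L[ℂ] M} {r : S →L[ℂ] M →L[ℂ] M}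

theorem IsBanachBimodule.pointwise (hM : IsBanachBimodule l r) :
    IsBanachBimodule (pointwise X l) (pointwise X r) where
  lsmul_mul f f' g := by ext x; simp [hM.lsmul_mul]
  rsmul_mul h h' g := by ext x; simp [hM.rsmul_mul]
  smul_comm f h g := by ext x; simp [hM.smul_comm]
  norm_lsmul := norm_pointwise_apply_le hM.norm_lsmul
  norm_rsmul := norm_pointwise_apply_le hM.norm_rsmul

variable [LocallyCompactSpace X] [T2Space X]

theorem NondegenerateBimodule.pointwise (hM : NondegenerateBimodule l r) :
    NondegenerateBimodule (pointwise X l) (pointwise X r) :=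
  ⟨(dense_span_pointwise (dense_iff_closure_eq.2 hM.1)).closure_eq,
    (dense_span_pointwise (dense_iff_closure_eq.2 hM.2)).closure_eq⟩

theorem SeparatesVectors.pointwise {V W : Type*} [NormedAddCommGroup V] [NormedSpace ℂ V]
    [NormedAddCommGroup W] [NormedSpace ℂ W] {l : V →L[ℂ] W →L[ℂ] W} (hl : SeparatesVectors l) :
    SeparatesVectors (pointwise X l) := by
  refine fun g hg => ZeroAtInftyContinuousMap.ext fun x => hl _ fun a => ?_
  obtain ⟨f, rfl⟩ := exists_zeroAtInfty_apply_eq x a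
  exact DFunLike.congr_fun (hg f) x

end PointwiseBimodule

section StrictMultiplierField

variable {X R S M : Type*} [TopologicalSpace X]
variable [NonUnitalNormedRing R] [NormedSpace ℂ R] [NonUnitalNormedRing S] [NormedSpace ℂ S]
variable [NormedAddCommGroup M] [NormedSpace ℂ M]
variable {l : R →L[ℂ] M →L[ℂ] M} {r : S →L[ℂ] M →L[ℂ] M}
variable {ξ ξ' : X → (R →L[ℂ] M) × (S →L[ℂ] M)}

/-- Membership in `C_b^str(X, M(E))` for a bimodule `E` over arbitrary normed algebras. -/
structure IsStrictMultiplierField (l : R →L[ℂ] M →L[ℂ] M) (r : S →L[ℂ] M →L[ℂ] M)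
    (ξ : X → (R →L[ℂ] M) × (S →L[ℂ] M)) : Prop where
  isMultiplier : ∀ x, IsMultiplier l r (ξ x)
  fst : IsStrictField fun x => (ξ x).1
  snd : IsStrictField fun x => (ξ x).2

/-- The map `Θ`, sending `ξ` to `(f ↦ (x ↦ f x · ξ x), h ↦ (x ↦ ξ x · h x))`. -/
noncomputable def IsStrictMultiplierField.toMultiplier (hξ : IsStrictMultiplierField l r ξ) :
    (C₀(X, R) →L[ℂ] C₀(X, M)) × (C₀(X, S) →L[ℂ] C₀(X, M)) :=
  (hξ.fst.toCLM, hξ.snd.toCLM)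

@[simp] theorem IsStrictMultiplierField.toMultiplier_fst_apply
    (hξ : IsStrictMultiplierField l r ξ) (f : C₀(X, R)) (x : X) :
    hξ.toMultiplier.1 f x = (ξ x).1 (f x) :=
  hξ.fst.toCLM_apply f x

@[simp] theorem IsStrictMultiplierField.toMultiplier_snd_apply
    (hξ : IsStrictMultiplierField l r ξ) (h : C₀(X, S)) (x : X) :
    hξ.toMultiplier.2 h x = (ξ x).2 (h x) :=
  hξ.snd.toCLM_apply h x

theorem IsStrictMultiplierField.isMultiplier_toMultiplier
    (hξ : IsStrictMultiplierField l r ξ) :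
    IsMultiplier (pointwise X l) (pointwise X r) hξ.toMultiplier := fun f h => by
  ext x
  simpa using hξ.isMultiplier x (f x) (h x)

variable [LocallyCompactSpace X] [T2Space X]

theorem IsStrictMultiplierField.eq_of_toMultiplier_eq (hξ : IsStrictMultiplierField l r ξ)
    (hξ' : IsStrictMultiplierField l r ξ') (h : hξ.toMultiplier = hξ'.toMultiplier) : ξ = ξ' := by
  have hfst : (fun x => (ξ x).1) = fun x => (ξ' x).1 := eq_of_forall_apply_eq fun f x => by
    simp only [← hξ.toMultiplier_fst_apply, ← hξ'.toMultiplier_fst_apply, h]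
  have hsnd : (fun x => (ξ x).2) = fun x => (ξ' x).2 := eq_of_forall_apply_eq fun f x => by
    simp only [← hξ.toMultiplier_snd_apply, ← hξ'.toMultiplier_snd_apply, h]
  exact funext fun x => Prod.ext (congrFun hfst x) (congrFun hsnd x)

theorem IsStrictMultiplierField.norm_toMultiplier_le_iff (hξ : IsStrictMultiplierField l r ξ)
    {C : ℝ} (hC : 0 ≤ C) : ‖hξ.toMultiplier‖ ≤ C ↔ ∀ x, ‖ξ x‖ ≤ C := by
  simp only [Prod.norm_def, max_le_iff, forall_and]
  exact and_congr (norm_le_iff_forall_norm_field_le hξ.toMultiplier_fst_apply hC)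
    (norm_le_iff_forall_norm_field_le hξ.toMultiplier_snd_apply hC)

theorem IsStrictMultiplierField.norm_toMultiplier (hξ : IsStrictMultiplierField l r ξ) :
    ‖hξ.toMultiplier‖ = ⨆ x, ‖ξ x‖ := by
  have hnonneg : 0 ≤ ‖hξ.toMultiplier‖ := norm_nonneg hξ.toMultiplier
  have norm_le := (hξ.norm_toMultiplier_le_iff hnonneg).1 le_rfl
  have hbdd : BddAbove (Set.range fun x => ‖ξ x‖) := ⟨_, Set.forall_mem_range.2 norm_le⟩
  refine le_antisymm ?_ (Real.iSup_le norm_le hnonneg)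
  exact (hξ.norm_toMultiplier_le_iff (Real.iSup_nonneg fun x => norm_nonneg _)).2 (le_ciSup hbdd)

theorem isStrictMultiplierField_iota (hM : IsBanachBimodule l r) (g : C₀(X, M)) :
    IsStrictMultiplierField l r fun x => iota l r (g x) where
  isMultiplier x := hM.isMultiplier_iota (g x)
  fst := .of_forall_apply_eq (R := (pointwise X l).flip g) fun _ _ => rfl
  snd := .of_forall_apply_eq (R := (pointwise X r).flip g) fun _ _ => rfl

section Local

variable {m : (C₀(X, R) →L[ℂ] C₀(X, M)) × (C₀(X, S) →L[ℂ] C₀(X, M))}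

theorem IsMultiplier.fst_apply_eq_zero (hm : IsMultiplier (pointwise X l) (pointwise X r) m)
    (hr : SeparatesVectors r) {f : C₀(X, R)} {x : X} (hf : f x = 0) : m.1 f x = 0 := by
  refine hr _ fun b => ?_
  obtain ⟨h, rfl⟩ := exists_zeroAtInfty_apply_eq x b
  simpa [hf] using (DFunLike.congr_fun (hm f h) x).symm

theorem IsMultiplier.snd_apply_eq_zero (hm : IsMultiplier (pointwise X l) (pointwise X r) m)
    (hl : SeparatesVectors l) {h : C₀(X, S)} {x : X} (hh : h x = 0) : m.2 h x = 0 := by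
  refine hl _ fun a => ?_
  obtain ⟨f, rfl⟩ := exists_zeroAtInfty_apply_eq x a
  simpa [hh] using DFunLike.congr_fun (hm f h) x

theorem IsMultiplier.exists_toMultiplier_eq
    (hm : IsMultiplier (pointwise X l) (pointwise X r) m) (hl : SeparatesVectors l)
    (hr : SeparatesVectors r) :
    ∃ (ξ : X → (R →L[ℂ] M) × (S →L[ℂ] M)) (hξ : IsStrictMultiplierField l r ξ),
      hξ.toMultiplier = m := by
  obtain ⟨ρ, hρ⟩ := exists_forall_apply_eq_of_local fun f x => hm.fst_apply_eq_zero hr (f := f)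
  obtain ⟨σ, hσ⟩ := exists_forall_apply_eq_of_local fun h x => hm.snd_apply_eq_zero hl (h := h)
  have hξ : IsStrictMultiplierField l r fun x => (ρ x, σ x) :=
    { isMultiplier x a b := by
        obtain ⟨f, rfl⟩ := exists_zeroAtInfty_apply_eq x a
        obtain ⟨h, rfl⟩ := exists_zeroAtInfty_apply_eq x b
        simpa [hρ, hσ] using DFunLike.congr_fun (hm f h) x
      fst := .of_forall_apply_eq hρ
      snd := .of_forall_apply_eq hσ }
  refine ⟨_, hξ, Prod.ext ?_ ?_⟩ <;> ext f x <;> simp [hρ, hσ]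

end Local

end StrictMultiplierField

section Theta

variable {X A B E : Type*} [TopologicalSpace X]
variable [NonUnitalCStarAlgebra A] [NonUnitalCStarAlgebra B]
variable [NormedAddCommGroup E] [NormedSpace ℂ E]
variable {lE : A →L[ℂ] E →L[ℂ] E} {rE : B →L[ℂ] E →L[ℂ] E}

theorem mem_Sstr_iff {ξ : X → (A →L[ℂ] E) × (B →L[ℂ] E)} :
    ξ ∈ Sstr X lE rE ↔ IsStrictMultiplierField lE rE ξ := by
  refine ⟨fun ⟨hmul, ⟨C, hC⟩, hfst, hsnd⟩ => ?_, fun hξ => ?_⟩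
  · exact ⟨hmul, ⟨⟨C, fun x => (norm_fst_le _).trans (hC x)⟩, hfst⟩,
      ⟨⟨C, fun x => (norm_snd_le _).trans (hC x)⟩, hsnd⟩⟩
  · obtain ⟨C, hC⟩ := hξ.fst.bounded
    obtain ⟨D, hD⟩ := hξ.snd.bounded
    exact ⟨hξ.isMultiplier, ⟨max C D, fun x => max_le_max (hC x) (hD x)⟩,
      hξ.fst.exists_apply_eq, hξ.snd.exists_apply_eq⟩

/-- The map `Θ` on `C_b^str(X, M(E))`. -/
noncomputable def strictTheta (ξ : Sstr X lE rE) :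
    (C₀(X, A) →L[ℂ] C₀(X, E)) × (C₀(X, B) →L[ℂ] C₀(X, E)) :=
  (mem_Sstr_iff.1 ξ.2).toMultiplier

@[simp] theorem strictTheta_fst_apply (ξ : Sstr X lE rE) (f : C₀(X, A)) (x : X) :
    (strictTheta ξ).1 f x = (ξ.val x).1 (f x) :=
  (mem_Sstr_iff.1 ξ.2).toMultiplier_fst_apply f x

@[simp] theorem strictTheta_snd_apply (ξ : Sstr X lE rE) (h : C₀(X, B)) (x : X) :
    (strictTheta ξ).2 h x = (ξ.val x).2 (h x) :=
  (mem_Sstr_iff.1 ξ.2).toMultiplier_snd_apply h x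

theorem isMultiplier_strictTheta (ξ : Sstr X lE rE) :
    IsMultiplier (pointwise X lE) (pointwise X rE) (strictTheta ξ) :=
  (mem_Sstr_iff.1 ξ.2).isMultiplier_toMultiplier

theorem isBimoduleMap_strictTheta :
    IsBimoduleMap (pointwise X lE) (pointwise X rE) (strictTheta (lE := lE) (rE := rE)) := by
  refine ⟨fun ξ ξ' ξ'' h => ?_, fun z ξ ξ' h => ?_, fun f ξ ξ' h => ?_, fun b ξ ξ' h => ?_⟩ <;>
    refine Prod.ext ?_ ?_ <;> ext f x <;> simp [h, aAct, bAct]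

theorem extendsEmbedding_strictTheta :
    ExtendsEmbedding (pointwise X lE) (pointwise X rE) (strictTheta (lE := lE) (rE := rE)) := by
  intro g ξ h
  refine Prod.ext ?_ ?_ <;> ext f x <;> simp [h, iota]

variable [LocallyCompactSpace X] [T2Space X]

theorem strictTheta_injective : Function.Injective (strictTheta (X := X) (lE := lE) (rE := rE)) :=
  fun ξ ξ' h =>
    Subtype.ext ((mem_Sstr_iff.1 ξ.2).eq_of_toMultiplier_eq (mem_Sstr_iff.1 ξ'.2) h)

theorem IsMultiplier.exists_strictTheta_eq
    {m : (C₀(X, A) →L[ℂ] C₀(X, E)) × (C₀(X, B) →L[ℂ] C₀(X, E))}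
    (hm : IsMultiplier (pointwise X lE) (pointwise X rE) m) (hl : SeparatesVectors lE)
    (hr : SeparatesVectors rE) : ∃ ξ : Sstr X lE rE, strictTheta ξ = m :=
  let ⟨ξ, hξ, h⟩ := hm.exists_toMultiplier_eq hl hr
  ⟨⟨ξ, mem_Sstr_iff.2 hξ⟩, h⟩

theorem norm_strictTheta (ξ : Sstr X lE rE) : ‖strictTheta ξ‖ = ⨆ x, ‖ξ.val x‖ :=
  (mem_Sstr_iff.1 ξ.2).norm_toMultiplier

theorem eq_strictTheta (hE : IsBanachBimodule lE rE) (hl : SeparatesVectors lE)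
    (hr : SeparatesVectors rE)
    {Ψ : Sstr X lE rE → (C₀(X, A) →L[ℂ] C₀(X, E)) × (C₀(X, B) →L[ℂ] C₀(X, E))}
    (hΨ : ∀ ξ, IsMultiplier (pointwise X lE) (pointwise X rE) (Ψ ξ))
    (hmap : IsBimoduleMap (pointwise X lE) (pointwise X rE) Ψ)
    (hext : ExtendsEmbedding (pointwise X lE) (pointwise X rE) Ψ) : Ψ = strictTheta := by
  funext ξ
  refine (hΨ ξ).eq_of_aAct_eq (isMultiplier_strictTheta ξ) hl.pointwise hr.pointwise fun f => ?_
  let ζ : Sstr X lE rE :=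
    ⟨fun x => iota lE rE ((strictTheta ξ).1 f x),
      mem_Sstr_iff.2 (isStrictMultiplierField_iota hE _)⟩
  have hζ (x : X) : ζ.val x = aAct lE (f x) (ξ.val x) := by
    rw [(ξ.2.1 x).aAct_eq_iota hE hr, ← strictTheta_fst_apply]
  calc aAct (pointwise X lE) f (Ψ ξ) = Ψ ζ := (hmap.2.2.1 f ξ ζ hζ).symm
    _ = iota (pointwise X lE) (pointwise X rE) ((strictTheta ξ).1 f) := hext _ ζ fun _ => rfl
    _ = aAct (pointwise X lE) f (strictTheta ξ) :=
      ((isMultiplier_strictTheta ξ).aAct_eq_iota hE.pointwise hr.pointwise f).symm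

end Theta

section CStarCorrespondence

open Filter Topology

theorem exists_isApproximateUnit_norm_le_one_star_eq (A : Type*) [NonUnitalCStarAlgebra A] :
    ∃ F : Filter A, F.IsApproximateUnit ∧ (∀ᶠ e in F, ‖e‖ ≤ 1) ∧ ∀ᶠ e in F, star e = e := by
  let : PartialOrder A := CStarAlgebra.spectralOrder A
  have : StarOrderedRing A := CStarAlgebra.spectralOrderedRing A
  have h := CStarAlgebra.increasingApproximateUnit A
  exact ⟨_, h.toIsApproximateUnit, h.eventually_norm, h.eventually_star_eq⟩

namespace IsCStarCorrespondence

variable {A B E : Type*} [NonUnitalCStarAlgebra A] [NonUnitalCStarAlgebra B]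
variable [NormedAddCommGroup E] [NormedSpace ℂ E]
variable {lE : A →L[ℂ] E →L[ℂ] E} {rE : B →L[ℂ] E →L[ℂ] E} {ip : E → E → B}

theorem ip_sub_right (hE : IsCStarCorrespondence lE rE ip) (ξ ζ η : E) :
    ip ξ (ζ - η) = ip ξ ζ - ip ξ η := by
  rw [eq_sub_iff_add_eq, ← hE.ip_add_right, sub_add_cancel]

theorem ip_sub_left (hE : IsCStarCorrespondence lE rE ip) (ξ ζ η : E) :
    ip (ξ - ζ) η = ip ξ η - ip ζ η := by
  rw [← hE.ip_star, hE.ip_sub_right, star_sub, hE.ip_star, hE.ip_star]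

theorem ip_rsmul_left (hE : IsCStarCorrespondence lE rE ip) (b : B) (ξ ζ : E) :
    ip (rE b ξ) ζ = star b * ip ξ ζ := by
  rw [← hE.ip_star, hE.ip_rsmul_right, star_mul, hE.ip_star]

theorem norm_sq_eq (hE : IsCStarCorrespondence lE rE ip) (ξ : E) : ‖ξ‖ ^ 2 = ‖ip ξ ξ‖ := by
  rw [hE.norm_eq, Real.sq_sqrt (norm_nonneg _)]

-- Mathlib's `CStarModule` is written with a left action, hence the opposite algebra.
theorem norm_ip_le (hE : IsCStarCorrespondence lE rE ip) (ξ ζ : E) : ‖ip ξ ζ‖ ≤ ‖ξ‖ * ‖ζ‖ := by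
  let : PartialOrder Bᵐᵒᵖ := CStarAlgebra.spectralOrder _
  have : StarOrderedRing Bᵐᵒᵖ := CStarAlgebra.spectralOrderedRing _
  let : SMul Bᵐᵒᵖ E := ⟨fun b ξ => rE b.unop ξ⟩
  let : CStarModule Bᵐᵒᵖ E :=
    { inner x y := MulOpposite.op (ip x y)
      inner_add_right := by simp [hE.ip_add_right]
      inner_self_nonneg {x} := by
        obtain ⟨c, hc⟩ := hE.ip_nonneg x
        rw [hc, MulOpposite.op_mul, MulOpposite.op_star]
        exact mul_star_self_nonneg _
      inner_self {x} := by
        refine (MulOpposite.op_eq_zero_iff _).trans ⟨hE.ip_definite x, ?_⟩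
        rintro rfl
        simpa using hE.ip_smul_right 0 0 0
      inner_op_smul_right {b x y} := congrArg MulOpposite.op (hE.ip_rsmul_right x y b.unop)
      inner_smul_right_complex := by simp [hE.ip_smul_right]
      star_inner x y := congrArg MulOpposite.op (hE.ip_star x y)
      norm_eq_sqrt_norm_inner_self := hE.norm_eq }
  exact CStarModule.norm_inner_le (A := Bᵐᵒᵖ) E (x := ξ) (y := ζ)

theorem norm_rsmul_le (hE : IsCStarCorrespondence lE rE ip) (b : B) (ξ : E) :
    ‖rE b ξ‖ ≤ ‖b‖ * ‖ξ‖ := by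
  refine le_of_sq_le_sq ?_ (by positivity)
  calc ‖rE b ξ‖ ^ 2 = ‖star b * ip ξ ξ * b‖ := by
        rw [hE.norm_sq_eq, hE.ip_rsmul_right, hE.ip_rsmul_left]
    _ ≤ ‖star b‖ * ‖ip ξ ξ‖ * ‖b‖ := norm_mul₃_le
    _ = (‖b‖ * ‖ξ‖) ^ 2 := by rw [norm_star, mul_pow, hE.norm_sq_eq]; ring

-- `‖a·ξ‖² = ‖⟨ξ, (a* a)·ξ⟩‖` bounds the norm of the action by its own square root.
theorem norm_lsmul_le (hE : IsCStarCorrespondence lE rE ip) (a : A) (ξ : E) :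
    ‖lE a ξ‖ ≤ ‖a‖ * ‖ξ‖ := by
  have hnonneg : 0 ≤ ‖lE‖ := lE.opNorm_nonneg
  have sq_le (a : A) (ξ : E) : ‖lE a ξ‖ ^ 2 ≤ ‖lE‖ * (‖a‖ * ‖ξ‖) ^ 2 :=
    calc ‖lE a ξ‖ ^ 2 = ‖ip ξ (lE (star a * a) ξ)‖ := by
          rw [hE.norm_sq_eq, hE.ip_lsmul, hE.lsmul_mul]
      _ ≤ ‖ξ‖ * (‖lE‖ * ‖star a * a‖ * ‖ξ‖) :=
          (hE.norm_ip_le _ _).trans (by gcongr; exact lE.le_opNorm₂ _ _)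
      _ = ‖lE‖ * (‖a‖ * ‖ξ‖) ^ 2 := by rw [CStarRing.norm_star_mul_self]; ring
  have norm_le_sqrt : ‖lE‖ ≤ √‖lE‖ := by
    refine lE.opNorm_le_bound₂ (Real.sqrt_nonneg _) fun a ξ => le_of_sq_le_sq ?_ (by positivity)
    rw [mul_assoc, mul_pow, Real.sq_sqrt hnonneg]
    exact sq_le a ξ
  have norm_le_one : ‖lE‖ ≤ 1 := by
    have : ‖lE‖ ^ 2 ≤ ‖lE‖ := (Real.le_sqrt hnonneg hnonneg).1 norm_le_sqrt
    by_contra!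
    nlinarith
  simpa using (lE a).le_of_opNorm_le (lE.le_of_opNorm_le norm_le_one a) ξ

theorem isBanachBimodule (hE : IsCStarCorrespondence lE rE ip) : IsBanachBimodule lE rE where
  lsmul_mul := hE.lsmul_mul
  rsmul_mul := hE.rsmul_mul
  smul_comm := hE.smul_comm
  norm_lsmul := hE.norm_lsmul_le
  norm_rsmul := hE.norm_rsmul_le

theorem norm_rsmul_sub_sq_le (hE : IsCStarCorrespondence lE rE ip) {e : B} (he : ‖e‖ ≤ 1)
    (hstar : star e = e) (ξ : E) : ‖rE e ξ - ξ‖ ^ 2 ≤ 2 * ‖ip ξ ξ * e - ip ξ ξ‖ := by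
  have hip : ip (rE e ξ - ξ) (rE e ξ - ξ)
      = e * (ip ξ ξ * e - ip ξ ξ) - (ip ξ ξ * e - ip ξ ξ) := by
    rw [hE.ip_sub_right, hE.ip_sub_left, hE.ip_sub_left, hE.ip_rsmul_left, hE.ip_rsmul_left,
      hE.ip_rsmul_right, hstar]
    noncomm_ring
  rw [hE.norm_sq_eq, hip, two_mul]
  refine (norm_sub_le _ _).trans ?_
  gcongr
  exact (norm_mul_le _ _).trans (mul_le_of_le_one_left (norm_nonneg _) he)

theorem tendsto_rsmul (hE : IsCStarCorrespondence lE rE ip) {F : Filter B}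
    (hF : F.IsApproximateUnit) (hnorm : ∀ᶠ e in F, ‖e‖ ≤ 1) (hstar : ∀ᶠ e in F, star e = e)
    (ξ : E) : Tendsto (fun e => rE e ξ) F (𝓝 ξ) := by
  have hlim : Tendsto (fun e => 2 * ‖ip ξ ξ * e - ip ξ ξ‖) F (𝓝 0) := by
    simpa using (tendsto_iff_norm_sub_tendsto_zero.1 (hF.tendsto_mul_left (ip ξ ξ))).const_mul 2
  have hsq : Tendsto (fun e => ‖rE e ξ - ξ‖ ^ 2) F (𝓝 0) := by
    refine squeeze_zero' (Eventually.of_forall fun _ => by positivity) ?_ hlim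
    filter_upwards [hnorm, hstar] with e he hes using hE.norm_rsmul_sub_sq_le he hes ξ
  exact tendsto_iff_norm_sub_tendsto_zero.2 (by simpa using hsq.sqrt)

theorem nondegenerateBimodule (hE : IsCStarCorrespondence lE rE ip) :
    NondegenerateBimodule lE rE := by
  obtain ⟨F, hF, hnorm, hstar⟩ := exists_isApproximateUnit_norm_le_one_star_eq B
  have := hF.neBot
  refine ⟨hE.nondegenerate, Set.eq_univ_of_forall fun ξ => ?_⟩
  exact mem_closure_of_tendsto (hE.tendsto_rsmul hF hnorm hstar ξ)
    (Eventually.of_forall fun e => Submodule.subset_span ⟨e, ξ, rfl⟩)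

end IsCStarCorrespondence

end CStarCorrespondence

theorem strictlyContinuousBounded_isomorphic_multiplier_bimodule_of_C0_general
    (X : Type*) [TopologicalSpace X] [LocallyCompactSpace X] [T2Space X]
    {A B E : Type*} [NonUnitalCStarAlgebra A] [NonUnitalCStarAlgebra B]
    [NormedAddCommGroup E] [NormedSpace ℂ E]
    (lE : A →L[ℂ] E →L[ℂ] E) (rE : B →L[ℂ] E →L[ℂ] E)
    (hE : IsBanachBimodule lE rE) (hnd : NondegenerateBimodule lE rE) :
    ∃ (lC : C₀(X, A) →L[ℂ] C₀(X, E) →L[ℂ] C₀(X, E))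
      (rC : C₀(X, B) →L[ℂ] C₀(X, E) →L[ℂ] C₀(X, E)),
      (∀ (f : C₀(X, A)) (g : C₀(X, E)) (x : X), lC f g x = lE (f x) (g x)) ∧
      (∀ (h : C₀(X, B)) (g : C₀(X, E)) (x : X), rC h g x = rE (h x) (g x)) ∧
      IsBanachBimodule lC rC ∧ NondegenerateBimodule lC rC ∧
      ∃ Θ : ↥(Sstr X lE rE) → (C₀(X, A) →L[ℂ] C₀(X, E)) × (C₀(X, B) →L[ℂ] C₀(X, E)),
        (∀ ξ, IsMultiplier lC rC (Θ ξ)) ∧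
        (∀ (ξ : ↥(Sstr X lE rE)) (f : C₀(X, A)) (x : X), ((Θ ξ).1 f) x = (ξ.val x).1 (f x)) ∧
        (∀ (ξ : ↥(Sstr X lE rE)) (h : C₀(X, B)) (x : X), ((Θ ξ).2 h) x = (ξ.val x).2 (h x)) ∧
        Function.Injective Θ ∧
        (∀ m : (C₀(X, A) →L[ℂ] C₀(X, E)) × (C₀(X, B) →L[ℂ] C₀(X, E)),
          IsMultiplier lC rC m → ∃ ξ, Θ ξ = m) ∧
        (∀ ξ : ↥(Sstr X lE rE), ‖Θ ξ‖ = ⨆ x : X, ‖ξ.val x‖) ∧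
        IsBimoduleMap lC rC Θ ∧ ExtendsEmbedding lC rC Θ ∧
        ∀ Ψ : ↥(Sstr X lE rE) → (C₀(X, A) →L[ℂ] C₀(X, E)) × (C₀(X, B) →L[ℂ] C₀(X, E)),
          (∀ ξ, IsMultiplier lC rC (Ψ ξ)) → IsBimoduleMap lC rC Ψ →
            ExtendsEmbedding lC rC Ψ → Ψ = Θ := by
  obtain ⟨F, hF, hFnorm, -⟩ := exists_isApproximateUnit_norm_le_one_star_eq A
  obtain ⟨G, hG, hGnorm, -⟩ := exists_isApproximateUnit_norm_le_one_star_eq B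
  have hl := hE.separatesVectors_left hnd hF hFnorm
  have hr := hE.separatesVectors_right hnd hG hGnorm
  exact ⟨pointwise X lE, pointwise X rE, fun _ _ _ => rfl, fun _ _ _ => rfl, hE.pointwise,
    hnd.pointwise, strictTheta, isMultiplier_strictTheta, strictTheta_fst_apply,
    strictTheta_snd_apply, strictTheta_injective, fun _ hm => hm.exists_strictTheta_eq hl hr,
    norm_strictTheta, isBimoduleMap_strictTheta, extendsEmbedding_strictTheta,
    fun _ => eq_strictTheta hE hl hr⟩

/-- **`C_b^str(X, M(E)) ≅ M(C₀(X,E))` for a C*-correspondence `E` from `A` to `B`.** -/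
theorem strictlyContinuousBounded_isomorphic_multiplier_bimodule_of_C0
    (hE : IsCStarCorrespondence lE rE ip) :
    ∃ (lC : C₀(X, A) →L[ℂ] C₀(X, E) →L[ℂ] C₀(X, E))
      (rC : C₀(X, B) →L[ℂ] C₀(X, E) →L[ℂ] C₀(X, E)),
      -- the actions of `C₀(X,A)` and `C₀(X,B)` on `C₀(X,E)` are pointwise
      (∀ (f : C₀(X, A)) (g : C₀(X, E)) (x : X), lC f g x = lE (f x) (g x)) ∧
      (∀ (h : C₀(X, B)) (g : C₀(X, E)) (x : X), rC h g x = rE (h x) (g x)) ∧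
      -- `C₀(X,E)` is a nondegenerate Banach `C₀(X,A)`-`C₀(X,B)`-bimodule
      IsBanachBimodule lC rC ∧ NondegenerateBimodule lC rC ∧
      -- the isomorphism `Θ`
      ∃ Θ : ↥(Sstr X lE rE) → (C₀(X, A) →L[ℂ] C₀(X, E)) × (C₀(X, B) →L[ℂ] C₀(X, E)),
        -- `Θ` takes values in multipliers of `C₀(X,E)` and acts pointwise
        (∀ ξ, IsMultiplier lC rC (Θ ξ)) ∧
        (∀ (ξ : ↥(Sstr X lE rE)) (f : C₀(X, A)) (x : X), ((Θ ξ).1 f) x = (ξ.val x).1 (f x)) ∧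
        (∀ (ξ : ↥(Sstr X lE rE)) (h : C₀(X, B)) (x : X), ((Θ ξ).2 h) x = (ξ.val x).2 (h x)) ∧
        -- `Θ` is an isometric bijection onto `M(C₀(X,E))`
        Function.Injective Θ ∧
        (∀ m : (C₀(X, A) →L[ℂ] C₀(X, E)) × (C₀(X, B) →L[ℂ] C₀(X, E)),
          IsMultiplier lC rC m → ∃ ξ, Θ ξ = m) ∧
        (∀ ξ : ↥(Sstr X lE rE), ‖Θ ξ‖ = ⨆ x : X, ‖ξ.val x‖) ∧
        -- `Θ` is a bimodule map, extends the canonical embedding, and is the unique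
        -- such bimodule map
        IsBimoduleMap lC rC Θ ∧ ExtendsEmbedding lC rC Θ ∧
        ∀ Ψ : ↥(Sstr X lE rE) → (C₀(X, A) →L[ℂ] C₀(X, E)) × (C₀(X, B) →L[ℂ] C₀(X, E)),
          (∀ ξ, IsMultiplier lC rC (Ψ ξ)) → IsBimoduleMap lC rC Ψ →
            ExtendsEmbedding lC rC Ψ → Ψ = Θ :=
  strictlyContinuousBounded_isomorphic_multiplier_bimodule_of_C0_general X lE rE
    hE.isBanachBimodule hE.nondegenerateBimodule

end Stmt6
end

section
/- Let A be a finite-dimensional C*-algebra, B a C*-algebra, and B₀ ⊆ B a dense *-subalgebra. Then for every completely positive map Φ : A → B and every ε > 0 there exists a completely positive map Ψ : A → B whose range is contained in B₀ and which satisfies ‖Ψ‖ = ‖Φ‖ and ‖Ψ − Φ‖ ≤ ε (operator norms). -/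
/-!
STATEMENT 13: Approximation of completely positive maps out of a finite-dimensional
C*-algebra by completely positive maps with range in a dense *-subalgebra, with the
same norm and within `ε` in operator norm.

An element of a C*-algebra (such as `Matrix (Fin n) (Fin n) A`) is positive iff it is
of the form `star x * x`; we use this as the (equivalent) encoding of positivity.
-/

/-- A linear map between C*-algebras is *completely positive* if all of its matrix
amplifications map positive elements (i.e. elements of the form `star N * N`) to
positive elements. -/
def IsCompletelyPositive {A B : Type*} [NonUnitalCStarAlgebra A] [NonUnitalCStarAlgebra B]
    (Φ : A →L[ℂ] B) : Prop :=
  ∀ (n : ℕ) (M : Matrix (Fin n) (Fin n) A), (∃ N : Matrix (Fin n) (Fin n) A, M = star N * N) →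
    ∃ P : Matrix (Fin n) (Fin n) B, M.map ⇑Φ = star P * P

/-!
Let `τ` be the trace of the left regular representation of `A`. Left multiplication by a positive
element has nonnegative spectrum, so `τ` is positive; if the trace of such a multiplication
vanishes, then it is nilpotent and the element is zero. Thus `⟨x, y⟩ = τ (x⋆ y)` is an inner
product on `A`. Let `u` be an orthonormal basis for it. Expanding the trace in this basis,
`τ a = ∑ i, τ ((u i)⋆ a (u i)) = τ (a e)` with `e = ∑ i, (u i) (u i)⋆`, so `e` is the unit of `A`.
Hence `a = a e = ∑ i j, π a i j • (u i) (u j)⋆`, where `π a` is the matrix of left multiplication by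
`a`, and the matrix of the `(u i) (u j)⋆ = (u i) e (u j)⋆` has the form `W⋆ W`. Applying a
completely positive `Φ` gives `Φ a = ∑ i j, π a i j • (P⋆ P) i j` for some matrix `P` over `B`.
Every formula of this shape defines a completely positive map, so it suffices to move the entries
of `P` into `B₀` and then rescale.
-/

open scoped ComplexOrder

section LinearAlgebra

variable {K V : Type*} [Field K] [PartialOrder K] [IsOrderedAddMonoid K]
  [AddCommGroup V] [Module K V] [FiniteDimensional K V] {T : Module.End K V}

theorem trace_nonneg_of_spectrum_nonneg (hT : T.charpoly.Splits)
    (hspec : ∀ l ∈ spectrum K T, 0 ≤ l) : 0 ≤ LinearMap.trace K V T := by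
  rw [Module.End.trace_eq_sum_roots_charpoly_of_splits hT]
  exact Multiset.sum_nonneg fun l hl ↦
    hspec l ((T.mem_spectrum_iff_isRoot_charpoly l).2 (Polynomial.isRoot_of_mem_roots hl))

theorem isNilpotent_of_spectrum_nonneg_of_trace_eq_zero (hT : T.charpoly.Splits)
    (hspec : ∀ l ∈ spectrum K T, 0 ≤ l) (htrace : LinearMap.trace K V T = 0) :
    IsNilpotent T := by
  rw [Module.End.trace_eq_sum_roots_charpoly_of_splits hT] at htrace
  have hroots : ∀ l ∈ T.charpoly.roots, l = 0 :=
    Multiset.all_zero_of_le_zero_le_of_sum_eq_zero (fun l hl ↦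
      hspec l ((T.mem_spectrum_iff_isRoot_charpoly l).2 (Polynomial.isRoot_of_mem_roots hl))) htrace
  have hcharpoly : T.charpoly = Polynomial.X ^ T.charpoly.roots.card := by
    conv_lhs => rw [hT.eq_prod_roots_of_monic T.charpoly_monic, Multiset.eq_replicate_card.2 hroots]
    simp
  exact ⟨T.charpoly.roots.card, by
    rw [← Polynomial.aeval_X_pow (R := K), ← hcharpoly, T.aeval_self_charpoly]⟩

end LinearAlgebra

section RegularTrace

variable {A : Type*} [NonUnitalCStarAlgebra A]

theorem eq_zero_of_isSelfAdjoint_of_isNilpotent_mul {b : A} (hb : IsSelfAdjoint b)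
    (hnil : IsNilpotent (LinearMap.mul ℂ A b)) : b = 0 := by
  set L : Module.End ℂ A := LinearMap.mul ℂ A b
  obtain ⟨k, hk⟩ := hnil
  have hker : LinearMap.ker (L ^ 1) = LinearMap.ker (L ^ 2) := by
    ext x
    simp only [pow_one, pow_two, LinearMap.mem_ker, Module.End.mul_apply]
    refine ⟨fun hx ↦ by simp [hx], fun hx ↦ ?_⟩
    rw [← CStarRing.star_mul_self_eq_zero_iff]
    calc star (b * x) * (b * x) = star x * (b * (b * x)) := by
          rw [star_mul, hb.star_eq, mul_assoc]
      _ = 0 := by rw [show b * (b * x) = 0 from hx, mul_zero]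
  have hLb : b ∈ LinearMap.ker L := by
    rw [← pow_one L, Module.End.ker_pow_constant hker k, pow_add, hk]
    simp
  rw [← CStarRing.star_mul_self_eq_zero_iff, hb.star_eq]
  exact hLb

variable [PartialOrder A] [StarOrderedRing A]

theorem nonneg_of_mem_spectrum_mul {a : A} (ha : 0 ≤ a) {l : ℂ}
    (hl : l ∈ spectrum ℂ (LinearMap.mul ℂ A a)) : 0 ≤ l :=
  quasispectrum_nonneg_of_nonneg a ha l <|
    NonUnitalAlgHom.quasispectrum_apply_subset (NonUnitalAlgHom.lmul ℂ A) a <|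
      spectrum_subset_quasispectrum ℂ _ hl

variable [FiniteDimensional ℂ A]

variable (A) in
/-- The trace of the left regular representation `a ↦ (x ↦ a * x)`, a canonical faithful tracial
positive functional. It is bundled as a positive map so that `PositiveLinearMap.PreGNS` provides the
inner product for which `⟨x, y⟩` is the trace of `star x * y`. -/
noncomputable def regularTrace : A →ₚ[ℂ] ℂ :=
  .mk₀ (LinearMap.trace ℂ A ∘ₗ LinearMap.mul ℂ A) fun _ ha ↦
    trace_nonneg_of_spectrum_nonneg (IsAlgClosed.splits _) fun _ ↦ nonneg_of_mem_spectrum_mul ha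

theorem regularTrace_apply (a : A) :
    regularTrace A a = LinearMap.trace ℂ A (LinearMap.mul ℂ A a) := rfl

theorem regularTrace_mul_comm (a b : A) : regularTrace A (a * b) = regularTrace A (b * a) := by
  have hmul (x y : A) : LinearMap.mul ℂ A (x * y) = LinearMap.mul ℂ A x * LinearMap.mul ℂ A y :=
    map_mul (NonUnitalAlgHom.lmul ℂ A) x y
  rw [regularTrace_apply, regularTrace_apply, hmul, hmul, LinearMap.trace_mul_comm]

theorem eq_zero_of_regularTrace_star_mul_self {a : A} (ha : regularTrace A (star a * a) = 0) :
    a = 0 :=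
  (CStarRing.star_mul_self_eq_zero_iff a).1 <|
    eq_zero_of_isSelfAdjoint_of_isNilpotent_mul (.star_mul_self a) <|
      isNilpotent_of_spectrum_nonneg_of_trace_eq_zero (IsAlgClosed.splits _)
        (fun _ ↦ nonneg_of_mem_spectrum_mul (star_mul_self_nonneg a)) ha

end RegularTrace

/-- A finite family `u` is a *Parseval frame* for the sesquilinear form `⟨x, y⟩ = f (star x * y)` if
every `x` is recovered from its coefficients as `∑ i, ⟨u i, x⟩ • u i`; orthonormal bases are the
main example. Only this reconstruction formula is needed to expand traces and matrices. -/
def IsParsevalFrame {A ι : Type*} [NonUnitalCStarAlgebra A] [PartialOrder A] [Fintype ι]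
    (f : A →ₚ[ℂ] ℂ) (u : ι → A) : Prop :=
  ∀ x, ∑ i, f (star (u i) * x) • u i = x

namespace IsParsevalFrame

variable {A ι : Type*} [NonUnitalCStarAlgebra A] [PartialOrder A] [Fintype ι]
  {f : A →ₚ[ℂ] ℂ} {u : ι → A}

theorem trace_eq_sum (hu : IsParsevalFrame f u) [FiniteDimensional ℂ A] (T : Module.End ℂ A) :
    LinearMap.trace ℂ A T = ∑ i, f (star (u i) * T (u i)) := by
  have hT : T = ∑ i, (f.toLinearMap ∘ₗ LinearMap.mul ℂ A (star (u i))).smulRight (T (u i)) := by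
    ext x
    conv_lhs => rw [← hu x, map_sum]
    simp
  conv_lhs => rw [hT, map_sum]
  simp [LinearMap.trace_smulRight]

variable [StarOrderedRing A]

theorem exists_of_faithful [FiniteDimensional ℂ A] (hf : ∀ a, f (star a * a) = 0 → a = 0) :
    ∃ u : Fin (Module.finrank ℂ A) → A, IsParsevalFrame f u := by
  let _ : NormedAddCommGroup f.PreGNS := .ofSeparation fun x hx ↦ hf (f.ofPreGNS x) <| by
    rw [← f.preGNS_norm_sq, hx]
    simp
  have _ : FiniteDimensional ℂ f.PreGNS := inferInstanceAs (FiniteDimensional ℂ A)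
  exact ⟨stdOrthonormalBasis ℂ f.PreGNS, (stdOrthonormalBasis ℂ f.PreGNS).sum_repr'⟩

/-- The representation of `A` on `ℂ^ι` by left multiplication, with matrix coefficients
`⟨u i, a * u j⟩`. For a redundant frame it need not send a unit of `A` to the identity matrix. -/
noncomputable def leftMulMatrix (hu : IsParsevalFrame f u) : A →⋆ₙₐ[ℂ] Matrix ι ι ℂ where
  toFun a := .of fun i j ↦ f (star (u i) * (a * u j))
  map_smul' c a := by ext; simp [smul_mul_assoc, mul_smul_comm]
  map_zero' := by ext; simp
  map_add' a b := by ext; simp [add_mul, mul_add]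
  map_mul' a b := by
    ext i j
    calc f (star (u i) * (a * b * u j))
        = f (star (u i) * (a * ∑ k, f (star (u k) * (b * u j)) • u k)) := by rw [hu, mul_assoc]
      _ = ∑ k, f (star (u i) * (a * u k)) * f (star (u k) * (b * u j)) := by
        simp [Finset.mul_sum, mul_smul_comm, mul_comm]
  map_star' a := by
    ext i j
    simp [Matrix.star_apply, ← map_star f, mul_assoc]

theorem leftMulMatrix_apply (hu : IsParsevalFrame f u) (a : A) (i j : ι) :
    hu.leftMulMatrix a i j = f (star (u i) * (a * u j)) := rfl

theorem mul_sum_mul_star (hu : IsParsevalFrame f u) (a : A) :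
    a * ∑ j, u j * star (u j) = ∑ i, ∑ j, hu.leftMulMatrix a i j • (u i * star (u j)) := by
  rw [Finset.sum_comm, Finset.mul_sum]
  refine Finset.sum_congr rfl fun j _ ↦ ?_
  conv_lhs => rw [← mul_assoc, ← hu (a * u j), Finset.sum_mul]
  simp [leftMulMatrix_apply, smul_mul_assoc]

variable [FiniteDimensional ℂ A]

theorem mul_sum_mul_star_of_regularTrace (hu : IsParsevalFrame (regularTrace A) u) (a : A) :
    a * ∑ i, u i * star (u i) = a := by
  set e := ∑ i, u i * star (u i) with he
  have htrace (x : A) : regularTrace A (x * e) = regularTrace A x := by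
    rw [regularTrace_apply x, hu.trace_eq_sum, he, Finset.mul_sum, map_sum]
    refine Finset.sum_congr rfl fun i _ ↦ ?_
    rw [← mul_assoc, regularTrace_mul_comm]
    rfl
  refine sub_eq_zero.1 (eq_zero_of_regularTrace_star_mul_self ?_)
  rw [mul_sub, ← mul_assoc, map_sub, htrace, sub_self]

theorem exists_star_mul_self_eq_of_regularTrace (hu : IsParsevalFrame (regularTrace A) u) :
    ∃ W : Matrix ι ι A, star W * W = .of fun i j ↦ u i * star (u j) := by
  refine ⟨.of fun k l ↦ star (u l * u k), ?_⟩
  ext i j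
  calc _ = ∑ k, u i * (u k * star (u k)) * star (u j) := by
        simp [Matrix.mul_apply, Matrix.star_apply, mul_assoc]
    _ = u i * star (u j) := by
        rw [← Finset.sum_mul, ← Finset.mul_sum, hu.mul_sum_mul_star_of_regularTrace]

end IsParsevalFrame

theorem exists_sum_star_mul_self_eq {B κ : Type*} [NonUnitalCStarAlgebra B]
    (s : Finset κ) (R : κ → B) : ∃ P : B, ∑ k ∈ s, star (R k) * R k = star P * P := by
  let _ := CStarAlgebra.spectralOrder B
  have _ := CStarAlgebra.spectralOrderedRing B
  exact CStarAlgebra.nonneg_iff_eq_star_mul_self.1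
    (Finset.sum_nonneg fun k _ ↦ star_mul_self_nonneg (R k))

theorem exists_matrix_sum_star_mul_self_eq {B ι κ : Type*} [NonUnitalCStarAlgebra B] [Fintype ι]
    (s : Finset κ) (R : κ → Matrix ι ι B) :
    ∃ P : Matrix ι ι B, ∑ k ∈ s, star (R k) * R k = star P * P := by
  let _ := CStarAlgebra.spectralOrder B
  have _ := CStarAlgebra.spectralOrderedRing B
  exact exists_sum_star_mul_self_eq (B := CStarMatrix ι ι B) s R

namespace IsCompletelyPositive

variable {A B C : Type*} [NonUnitalCStarAlgebra A] [NonUnitalCStarAlgebra B]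
  [NonUnitalCStarAlgebra C]

theorem comp {Ψ : B →L[ℂ] C} {Φ : A →L[ℂ] B} (hΨ : IsCompletelyPositive Ψ)
    (hΦ : IsCompletelyPositive Φ) : IsCompletelyPositive (Ψ ∘L Φ) := fun n M hM ↦
  hΨ n (M.map Φ) (hΦ n M hM)

theorem real_smul {Φ : A →L[ℂ] B} (hΦ : IsCompletelyPositive Φ) {r : ℝ} (hr : 0 ≤ r) :
    IsCompletelyPositive (r • Φ) := by
  intro n M hM
  obtain ⟨P, hP⟩ := hΦ n M hM
  refine ⟨√r • P, ?_⟩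
  calc M.map (r • Φ) = r • M.map Φ := rfl
    _ = star (√r • P) * (√r • P) := by
      rw [hP, star_smul, star_trivial √r, smul_mul_smul_comm, Real.mul_self_sqrt hr]

theorem of_map_mul_of_map_star {Φ : A →L[ℂ] B} (hmul : ∀ a b, Φ (a * b) = Φ a * Φ b)
    (hstar : ∀ a, Φ (star a) = star (Φ a)) : IsCompletelyPositive Φ := by
  rintro n _ ⟨N, rfl⟩
  refine ⟨N.map Φ, ?_⟩
  ext i j
  simp [Matrix.mul_apply, Matrix.star_apply, hmul, hstar]

end IsCompletelyPositive

theorem dense_matrix {m n α : Type*} [TopologicalSpace α] {S : Set α} (hS : Dense S) :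
    Dense (S.matrix : Set (Matrix m n α)) := by
  rw [Set.matrix_eq_pi]
  exact dense_pi _ fun _ _ ↦ dense_pi _ fun _ _ ↦ hS

section ChoiMap

variable {E ι : Type*} [NormedAddCommGroup E] [NormedSpace ℂ E] [Fintype ι]

/-- The linear map with Choi matrix `P`, that is, the one sending the `(i, j)` matrix unit to
`P i j`. -/
noncomputable def choiMap (P : Matrix ι ι E) : Matrix ι ι ℂ →L[ℂ] E :=
  LinearMap.toContinuousLinearMap
    (∑ i, ∑ j, (Matrix.entryLinearMap ℂ ℂ i j).smulRight (P i j))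

theorem choiMap_apply (P : Matrix ι ι E) (X : Matrix ι ι ℂ) :
    choiMap P X = ∑ i, ∑ j, X i j • P i j := by
  simp [choiMap]

theorem map_choiMap {F : Type*} [NormedAddCommGroup F] [NormedSpace ℂ F] (Φ : E →L[ℂ] F)
    (P : Matrix ι ι E) (X : Matrix ι ι ℂ) : Φ (choiMap P X) = choiMap (P.map Φ) X := by
  simp [choiMap_apply]

theorem choiMap_mem {σ : Type*} [SetLike σ E] [AddSubmonoidClass σ E] [SMulMemClass σ ℂ E]
    {S : σ} {P : Matrix ι ι E} (hP : ∀ i j, P i j ∈ S) (X : Matrix ι ι ℂ) : choiMap P X ∈ S := by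
  rw [choiMap_apply]
  exact sum_mem fun i _ ↦ sum_mem fun j _ ↦ SMulMemClass.smul_mem _ (hP i j)

theorem continuous_choiMap_comp {V : Type*} [NormedAddCommGroup V] [NormedSpace ℂ V]
    [FiniteDimensional ℂ V] (π : V →L[ℂ] Matrix ι ι ℂ) :
    Continuous fun P : Matrix ι ι E ↦ choiMap P ∘L π := by
  rw [continuous_clm_apply]
  intro x
  simp only [ContinuousLinearMap.comp_apply, choiMap_apply]
  fun_prop

variable {B κ κ' : Type*} [NonUnitalCStarAlgebra B] [Fintype κ] [Fintype κ']

open scoped Matrix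

theorem choiMap_conjTranspose_mul_self (Q : Matrix κ ι B) (X Y : Matrix κ' ι ℂ) :
    choiMap (Qᴴ * Q) (Xᴴ * Y) =
      ∑ p : κ' × κ, star (∑ i, X p.1 i • Q p.2 i) * ∑ j, Y p.1 j • Q p.2 j := by
  calc choiMap (Qᴴ * Q) (Xᴴ * Y)
      = ∑ i, ∑ j, ∑ p : κ' × κ, (star (X p.1 i) * Y p.1 j) • (star (Q p.2 i) * Q p.2 j) := by
        simp only [choiMap_apply, Matrix.mul_apply, Matrix.conjTranspose_apply,
          Finset.sum_smul_sum, Fintype.sum_prod_type]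
    _ = ∑ p : κ' × κ, ∑ i, ∑ j, (star (X p.1 i) * Y p.1 j) • (star (Q p.2 i) * Q p.2 j) := by
        exact (Finset.sum_congr rfl fun i _ ↦ Finset.sum_comm).trans Finset.sum_comm
    _ = ∑ p : κ' × κ, star (∑ i, X p.1 i • Q p.2 i) * ∑ j, Y p.1 j • Q p.2 j := by
        simp only [star_sum, star_smul, Finset.sum_mul_sum, smul_mul_smul_comm]

open scoped Matrix.Norms.L2Operator in
theorem isCompletelyPositive_choiMap [DecidableEq ι] (Q : Matrix κ ι B) :
    IsCompletelyPositive (choiMap (Qᴴ * Q)) := by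
  rintro n _ ⟨N, rfl⟩
  obtain ⟨P, hP⟩ := exists_matrix_sum_star_mul_self_eq Finset.univ fun p : ι × κ ↦
    (.of fun r t ↦ ∑ i, N r t p.1 i • Q p.2 i : Matrix (Fin n) (Fin n) B)
  refine ⟨P, ?_⟩
  rw [← hP]
  ext s t
  calc choiMap (Qᴴ * Q) (∑ r, (N r s)ᴴ * N r t)
      = ∑ r, ∑ p : ι × κ, star (∑ i, N r s p.1 i • Q p.2 i) * ∑ j, N r t p.1 j • Q p.2 j := by
        simp only [map_sum, choiMap_conjTranspose_mul_self]
    _ = _ := by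
        rw [Finset.sum_comm]
        simp [Matrix.sum_apply, Matrix.mul_apply, Matrix.star_apply]

end ChoiMap

theorem exists_norm_eq_and_norm_sub_le_of_mem_closure {E : Type*} [NormedAddCommGroup E]
    [NormedSpace ℝ E] {S : Set E} (hS : ∀ r : ℝ, 0 ≤ r → ∀ y ∈ S, r • y ∈ S) {x : E}
    (hx : x ∈ closure S) {ε : ℝ} (hε : 0 < ε) : ∃ y ∈ S, ‖y‖ = ‖x‖ ∧ ‖y - x‖ ≤ ε := by
  rcases eq_or_ne x 0 with rfl | hx0
  · obtain ⟨y, hy⟩ := closure_nonempty_iff.1 ⟨_, hx⟩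
    exact ⟨0, by simpa using hS 0 le_rfl y hy, rfl, by simpa using hε.le⟩
  have hcont : ContinuousAt (fun y ↦ (‖x‖ / ‖y‖) • y) x := by
    have := norm_ne_zero_iff.2 hx0
    fun_prop (disch := assumption)
  have hnear : ∀ᶠ y in nhds x, ‖(‖x‖ / ‖y‖) • y - x‖ < ε := by
    have hlim := hcont.tendsto.eventually (Metric.ball_mem_nhds _ hε)
    simpa [div_self (norm_ne_zero_iff.2 hx0), dist_eq_norm] using hlim
  obtain ⟨y, hyS, hyε, hy0⟩ := ((mem_closure_iff_frequently.1 hx).and_eventually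
    (hnear.and (eventually_ne_nhds hx0))).exists
  refine ⟨(‖x‖ / ‖y‖) • y, hS _ (by positivity) y hyS, ?_, hyε.le⟩
  rw [norm_smul, norm_div, norm_norm, norm_norm, div_mul_cancel₀ _ (norm_ne_zero_iff.2 hy0)]

section FiniteDimensional

open scoped Matrix.Norms.L2Operator in
theorem exists_choiMap_comp_eq_id (A : Type*) [NonUnitalCStarAlgebra A] [FiniteDimensional ℂ A] :
    ∃ (n : ℕ) (π : A →L[ℂ] Matrix (Fin n) (Fin n) ℂ) (W : Matrix (Fin n) (Fin n) A),
      IsCompletelyPositive π ∧ choiMap (star W * W) ∘L π = .id ℂ A := by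
  let _ := CStarAlgebra.spectralOrder A
  have _ := CStarAlgebra.spectralOrderedRing A
  obtain ⟨u, hu⟩ := IsParsevalFrame.exists_of_faithful
    fun a : A ↦ eq_zero_of_regularTrace_star_mul_self
  obtain ⟨W, hW⟩ := hu.exists_star_mul_self_eq_of_regularTrace
  refine ⟨_, LinearMap.toContinuousLinearMap (hu.leftMulMatrix : A →ₗ[ℂ] _), W,
    .of_map_mul_of_map_star (map_mul hu.leftMulMatrix) (map_star hu.leftMulMatrix), ?_⟩
  ext a
  calc _ = ∑ i, ∑ j, hu.leftMulMatrix a i j • (u i * star (u j)) := by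
        rw [hW]
        exact choiMap_apply _ _
    _ = a := by rw [← hu.mul_sum_mul_star, hu.mul_sum_mul_star_of_regularTrace]

variable {A B : Type*} [NonUnitalCStarAlgebra A] [NonUnitalCStarAlgebra B] [FiniteDimensional ℂ A]

open scoped Matrix.Norms.L2Operator in
theorem IsCompletelyPositive.exists_eq_choiMap_comp {Φ : A →L[ℂ] B}
    (hΦ : IsCompletelyPositive Φ) :
    ∃ (n : ℕ) (π : A →L[ℂ] Matrix (Fin n) (Fin n) ℂ) (P : Matrix (Fin n) (Fin n) B),
      IsCompletelyPositive π ∧ Φ = choiMap (star P * P) ∘L π := by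
  obtain ⟨n, π, W, hπ, hW⟩ := exists_choiMap_comp_eq_id A
  obtain ⟨P, hP⟩ := hΦ n (star W * W) ⟨W, rfl⟩
  refine ⟨n, π, P, hπ, ?_⟩
  calc Φ = Φ ∘L choiMap (star W * W) ∘L π := by rw [hW, ContinuousLinearMap.comp_id]
    _ = choiMap (star P * P) ∘L π := by
      ext a
      simp [map_choiMap, hP]

open scoped Matrix.Norms.L2Operator in
theorem IsCompletelyPositive.mem_closure_of_dense {Φ : A →L[ℂ] B} (hΦ : IsCompletelyPositive Φ)
    {B₀ : NonUnitalStarSubalgebra ℂ B} (hB₀ : Dense (B₀ : Set B)) :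
    Φ ∈ closure {Ψ : A →L[ℂ] B | IsCompletelyPositive Ψ ∧ ∀ a, Ψ a ∈ B₀} := by
  obtain ⟨n, π, P, hπ, rfl⟩ := hΦ.exists_eq_choiMap_comp
  refine map_mem_closure (f := fun Q : Matrix (Fin n) (Fin n) B ↦ choiMap (star Q * Q) ∘L π)
    ((continuous_choiMap_comp π).comp (by fun_prop)) (dense_matrix hB₀ P) fun Q hQ ↦
      ⟨(isCompletelyPositive_choiMap Q).comp hπ, fun a ↦ ?_⟩
  refine choiMap_mem (fun i j ↦ ?_) (π a)
  rw [Matrix.mul_apply]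
  exact sum_mem fun k _ ↦ mul_mem (star_mem (hQ k i)) (hQ k j)

end FiniteDimensional

theorem cp_approx_by_cp_into_dense_starSubalgebra
    {A B : Type*} [NonUnitalCStarAlgebra A] [NonUnitalCStarAlgebra B]
    [FiniteDimensional ℂ A]
    (B₀ : NonUnitalStarSubalgebra ℂ B) (hB₀ : Dense (B₀ : Set B))
    (Φ : A →L[ℂ] B) (hΦ : IsCompletelyPositive Φ) (ε : ℝ) (hε : 0 < ε) :
    ∃ Ψ : A →L[ℂ] B, IsCompletelyPositive Ψ ∧ (∀ a : A, Ψ a ∈ B₀) ∧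
      ‖Ψ‖ = ‖Φ‖ ∧ ‖Ψ - Φ‖ ≤ ε := by
  have hsmul (r : ℝ) (hr : 0 ≤ r) (Ψ : A →L[ℂ] B)
      (hΨ : IsCompletelyPositive Ψ ∧ ∀ a, Ψ a ∈ B₀) :
      IsCompletelyPositive (r • Ψ) ∧ ∀ a, (r • Ψ) a ∈ B₀ :=
    ⟨hΨ.1.real_smul hr, fun a ↦ B₀.smul_mem (r : ℂ) (hΨ.2 a)⟩
  obtain ⟨Ψ, ⟨hcp, hmem⟩, hnorm, hdist⟩ :=
    exists_norm_eq_and_norm_sub_le_of_mem_closure hsmul (hΦ.mem_closure_of_dense hB₀) hε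
  exact ⟨Ψ, hcp, hmem, hnorm, hdist⟩
end

section
/- Let A and B be C*-algebras, n ≥ 1 an integer, and let E be a C*-correspondence from A to the C*-algebra Matₙ(B) of n×n matrices over B. Then there exist a C*-correspondence F from A to B and a bijective ℂ-linear map Ψ : E → Fⁿ (the space of n-tuples of elements of F) such that for all e, e' ∈ E, a ∈ A and M = (M_{ij}) ∈ Matₙ(B): (i) the (i,j) entry of the Matₙ(B)-valued inner product ⟨e, e'⟩ equals ⟨Ψ(e)_i, Ψ(e')_j⟩_B; (ii) Ψ(a·e)_i = a·Ψ(e)_i for each i; (iii) Ψ(e·M)_i = ∑_{j=1}^n Ψ(e)_j·M_{ji} for each i. In other words, up to unitary equivalence every C*-correspondence from A to Matₙ(B) arises as the n-fold direct sum ⊕ⁿF of a C*-correspondence F from A to B, equipped with the canonical matrix operations. -/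
/-!
STATEMENT 14: Every C*-correspondence from a C*-algebra `A` to the matrix C*-algebra
`Matₙ(B)` is (up to unitary equivalence) the `n`-fold direct sum `Fⁿ` of a
C*-correspondence `F` from `A` to `B`, with the canonical matrix operations.

The C*-norm of a matrix `M ∈ Matₙ(B)` is the operator norm of `M` acting on the Hilbert
`B`-module of columns `Bⁿ`; this is the function `cstarMatNorm` below, and it is used to
state the norm compatibility on the correspondence `E` from `A` to `Matₙ(B)`.
Positivity of inner products is encoded via the C*-characterisation `x = star c * c`.
-/

namespace Stmt14

universe u v

/-- A C*-correspondence from `A` to a C*-algebra `C` whose C*-norm function is `nC`. -/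
structure Correspondence (A : Type u) (C : Type v) [NonUnitalRing A] [StarRing A]
    [NonUnitalRing C] [StarRing C] [Module ℂ C] (nC : C → ℝ) where
  /-- the underlying space -/
  carrier : Type (max u v)
  [instNormed : NormedAddCommGroup carrier]
  [instModule : NormedSpace ℂ carrier]
  [instComplete : CompleteSpace carrier]
  /-- the left action of `A` -/
  lsmul : A → carrier → carrier
  /-- the right action of `C` -/
  rsmul : carrier → C → carrier
  /-- the `C`-valued inner product -/
  ip : carrier → carrier → C
  ip_add_right : ∀ ξ ζ η, ip ξ (ζ + η) = ip ξ ζ + ip ξ η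
  ip_smul_right : ∀ (c : ℂ) ξ ζ, ip ξ (c • ζ) = c • ip ξ ζ
  ip_rsmul_right : ∀ ξ ζ b, ip ξ (rsmul ζ b) = ip ξ ζ * b
  ip_star : ∀ ξ ζ, star (ip ξ ζ) = ip ζ ξ
  ip_nonneg : ∀ ξ, ∃ c, ip ξ ξ = star c * c
  ip_definite : ∀ ξ, ip ξ ξ = 0 → ξ = 0
  norm_eq : ∀ ξ, ‖ξ‖ = Real.sqrt (nC (ip ξ ξ))
  rsmul_add_left : ∀ ξ ζ b, rsmul (ξ + ζ) b = rsmul ξ b + rsmul ζ b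
  rsmul_add_right : ∀ ξ b b', rsmul ξ (b + b') = rsmul ξ b + rsmul ξ b'
  rsmul_rsmul : ∀ ξ b b', rsmul (rsmul ξ b) b' = rsmul ξ (b * b')
  lsmul_add : ∀ a ξ ζ, lsmul a (ξ + ζ) = lsmul a ξ + lsmul a ζ
  lsmul_smul : ∀ a (c : ℂ) ξ, lsmul a (c • ξ) = c • lsmul a ξ
  lsmul_add_left : ∀ a a' ξ, lsmul (a + a') ξ = lsmul a ξ + lsmul a' ξ
  lsmul_lsmul : ∀ a a' ξ, lsmul (a * a') ξ = lsmul a (lsmul a' ξ)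
  lsmul_bounded : ∀ a, ∃ M : ℝ, ∀ ξ, ‖lsmul a ξ‖ ≤ M * ‖ξ‖
  ip_lsmul : ∀ a ξ ζ, ip (lsmul a ξ) ζ = ip ξ (lsmul (star a) ζ)
  lsmul_rsmul : ∀ a ξ b, lsmul a (rsmul ξ b) = rsmul (lsmul a ξ) b
  nondegenerate : closure (↑(Submodule.span ℂ {y : carrier | ∃ a ξ, lsmul a ξ = y}) : Set carrier)
    = Set.univ

attribute [instance] Correspondence.instNormed Correspondence.instModule
  Correspondence.instComplete

/-- The (unique) C*-norm on `Matₙ(B)`: the operator norm of a matrix acting on the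
Hilbert `B`-module `Bⁿ` of columns, where `‖v‖ = ‖∑ᵢ vᵢ* vᵢ‖^{1/2}` for `v ∈ Bⁿ`. -/
noncomputable def cstarMatNorm {B : Type v} [NonUnitalNormedRing B] [StarRing B] {n : ℕ}
    (M : Matrix (Fin n) (Fin n) B) : ℝ :=
  sSup {r : ℝ | ∃ v : Fin n → B, ‖∑ i, star (v i) * v i‖ ≤ 1 ∧
    r = Real.sqrt ‖∑ i, star (∑ j, M i j * v j) * (∑ j, M i j * v j)‖}

variable {A : Type u} [NonUnitalCStarAlgebra A] {B : Type v} [NonUnitalCStarAlgebra B]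

/-!
A Hilbert `C`-module is automatically a module over the multiplier algebra of `C`, so the elements
of `E` can be multiplied by the matrix units `eᵢⱼ`, which are multipliers of `Matₙ(B)` even if `B`
has no unit. For a fixed index `o` the corner `F = E eₒₒ` has inner products in
`eₒₒ Matₙ(B) eₒₒ ≅ B`, and `e ↦ (e eᵢₒ)ᵢ` identifies `E` with `Fⁿ`; the inverse is
`f ↦ ∑ᵢ fᵢ eₒᵢ`.
-/

open Filter MulOpposite Topology
open scoped MultiplierAlgebra RightActions

/- Mathlib lets matrices act on rows and measures a row `v` by `∑ v i * star (v i)`; the adjoint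
translates this into the columns of `cstarMatNorm`. -/
theorem cstarMatNorm_eq_norm_ofMatrix [PartialOrder B] [StarOrderedRing B] {n : ℕ}
    (M : Matrix (Fin n) (Fin n) B) : cstarMatNorm M = ‖CStarMatrix.ofMatrix M‖ := by
  let row (v : Fin n → B) : WithCStarModule B (Fin n → B) :=
    (WithCStarModule.equiv B _).symm (star v)
  have row_surjective : row.Surjective :=
    (WithCStarModule.equiv B _).symm.surjective.comp star_involutive.surjective
  have norm_row (v : Fin n → B) : ‖row v‖ = √‖∑ i, star (v i) * v i‖ := by
    simp [row, WithCStarModule.pi_norm, WithCStarModule.inner_def]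
  have toCLM_row (v : Fin n → B) :
      CStarMatrix.toCLM (star (CStarMatrix.ofMatrix M)) (row v) = row (M.mulVec v) := by
    ext j
    simp [row, CStarMatrix.toCLM_apply_eq_sum, CStarMatrix.star_apply, CStarMatrix.ofMatrix_apply,
      Matrix.mulVec, dotProduct]
  rw [← norm_star, CStarMatrix.norm_def, ← ContinuousLinearMap.sSup_unitClosedBall_eq_norm,
    cstarMatNorm]
  congr 1
  ext r
  simp only [Set.mem_ofPred_eq, Set.mem_image, row_surjective.exists, mem_closedBall_zero_iff,
    toCLM_row, norm_row, Real.sqrt_le_one, Matrix.mulVec, dotProduct, @eq_comm ℝ r]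

section Multipliers

variable {𝕜 C : Type*} [NontriviallyNormedField 𝕜] [NonUnitalNormedRing C] [NormedSpace 𝕜 C]
  [SMulCommClass 𝕜 C C] [IsScalarTower 𝕜 C C]

theorem multiplier_snd_sum_apply {ι : Type*} (s : Finset ι) (m : ι → 𝓜(𝕜, C)) (c : C) :
    (∑ i ∈ s, m i).snd c = ∑ i ∈ s, (m i).snd c :=
  map_sum (AddMonoidHom.mk' (fun m : 𝓜(𝕜, C) ↦ m.snd c) fun _ _ ↦ rfl) m s

variable [StarRing C] [CStarRing C]

/- Multipliers of a C*-algebra are determined by their products with its elements, so that the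
module-map property of `snd` follows from centrality alone. -/
theorem multiplier_snd_mul_apply (m : 𝓜(𝕜, C)) (a b : C) : m.snd (a * b) = a * m.snd b := by
  have sub_mul_eq_zero (c : C) : (m.snd (a * b) - a * m.snd b) * c = 0 := by
    rw [sub_mul, m.central, mul_assoc, mul_assoc, m.central, sub_self]
  exact sub_eq_zero.mp (CStarRing.mul_star_self_eq_zero_iff _ |>.mp (sub_mul_eq_zero _))

theorem multiplier_ext {m m' : 𝓜(𝕜, C)} (h : ∀ c, m.snd c = m'.snd c) : m = m' := by
  have mul_sub_eq_zero (a b : C) : a * (m.fst b - m'.fst b) = 0 := by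
    rw [mul_sub, ← m.central, ← m'.central, h, sub_self]
  refine DoubleCentralizer.ext 𝕜 C m m' (Prod.ext ?_ (ContinuousLinearMap.ext h))
  exact ContinuousLinearMap.ext fun b ↦ sub_eq_zero.mp
    (CStarRing.star_mul_self_eq_zero_iff _ |>.mp (mul_sub_eq_zero _ b))

end Multipliers

namespace Correspondence

section Algebra

variable {R : Type u} [NonUnitalRing R] [StarRing R] {C : Type v} [NonUnitalRing C] [StarRing C]
  [Module ℂ C] {nC : C → ℝ} (E : Correspondence R C nC)

theorem ip_rsmul_left (x y : E.carrier) (c : C) : E.ip (E.rsmul x c) y = star c * E.ip x y := by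
  rw [← E.ip_star, E.ip_rsmul_right, star_mul, E.ip_star]

theorem ip_lsmul_right (r : R) (x y : E.carrier) :
    E.ip x (E.lsmul r y) = E.ip (E.lsmul (star r) x) y := by
  rw [E.ip_lsmul, star_star]

theorem ip_sub_right (x y z : E.carrier) : E.ip x (y - z) = E.ip x y - E.ip x z :=
  map_sub (AddMonoidHom.mk' (E.ip x) (E.ip_add_right x)) y z

theorem ip_zero_right (x : E.carrier) : E.ip x 0 = 0 :=
  map_zero (AddMonoidHom.mk' (E.ip x) (E.ip_add_right x))

theorem rsmul_sub (x : E.carrier) (c c' : C) : E.rsmul x (c - c') = E.rsmul x c - E.rsmul x c' :=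
  map_sub (AddMonoidHom.mk' (E.rsmul x) (E.rsmul_add_right x)) c c'

theorem rsmul_sum {ι : Type*} (s : Finset ι) (x : E.carrier) (f : ι → C) :
    E.rsmul x (∑ i ∈ s, f i) = ∑ i ∈ s, E.rsmul x (f i) :=
  map_sum (AddMonoidHom.mk' (E.rsmul x) (E.rsmul_add_right x)) f s

variable {E} in
theorem ext_ip {x y : E.carrier} (h : ∀ z, E.ip z x = E.ip z y) : x = y := by
  refine sub_eq_zero.mp (E.ip_definite _ ?_)
  rw [ip_sub_right, h, sub_self]

end Algebra

section CStarCoefficients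

variable {R : Type u} [NonUnitalRing R] [StarRing R] {C : Type v} [NonUnitalCStarAlgebra C]
  (E : Correspondence R C fun c ↦ ‖c‖)

theorem norm_sq_eq (x : E.carrier) : ‖x‖ ^ 2 = ‖E.ip x x‖ := by
  rw [E.norm_eq, Real.sq_sqrt (norm_nonneg _)]

theorem norm_ip_le (x y : E.carrier) : ‖E.ip x y‖ ≤ ‖x‖ * ‖y‖ := by
  let _ := CStarAlgebra.spectralOrder Cᵐᵒᵖ
  have _ := CStarAlgebra.spectralOrderedRing Cᵐᵒᵖ
  -- `CStarModule` puts coefficients on the left, hence the passage to the opposite algebra.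
  let _ : SMul Cᵐᵒᵖ E.carrier := ⟨fun c x ↦ E.rsmul x c.unop⟩
  let _ : CStarModule Cᵐᵒᵖ E.carrier :=
    { inner := fun x y ↦ op (E.ip x y)
      inner_add_right := congrArg op (E.ip_add_right _ _ _)
      inner_self_nonneg := fun {x} ↦ by
        obtain ⟨c, hc⟩ := E.ip_nonneg x
        rw [hc, op_mul, op_star]
        exact mul_star_self_nonneg (op c)
      inner_self := fun {x} ↦ by
        rw [op_eq_zero_iff]
        refine ⟨E.ip_definite x, ?_⟩
        rintro rfl
        exact E.ip_zero_right 0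
      inner_op_smul_right := congrArg op (E.ip_rsmul_right _ _ _)
      inner_smul_right_complex := congrArg op (E.ip_smul_right _ _ _)
      star_inner := fun x y ↦ congrArg op (E.ip_star x y)
      norm_eq_sqrt_norm_inner_self := E.norm_eq }
  exact CStarModule.norm_inner_le (A := Cᵐᵒᵖ) E.carrier

theorem continuous_ip_right (z : E.carrier) : Continuous (E.ip z) :=
  AddMonoidHomClass.continuous_of_bound (AddMonoidHom.mk' (E.ip z) (E.ip_add_right z)) ‖z‖
    (E.norm_ip_le z)

theorem norm_rsmul_fst_sq_le (m : 𝓜(ℂ, C)) (x : E.carrier) (c : C) :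
    ‖E.rsmul x (m.fst c)‖ ^ 2 ≤ ‖m‖ * ‖c‖ * ‖m.snd (E.ip x x) * c‖ :=
  calc ‖E.rsmul x (m.fst c)‖ ^ 2 = ‖star (m.fst c) * (m.snd (E.ip x x) * c)‖ := by
        rw [norm_sq_eq, ip_rsmul_right, ip_rsmul_left, mul_assoc, m.central]
    _ ≤ ‖m.fst c‖ * ‖m.snd (E.ip x x) * c‖ := by
        simpa using norm_mul_le (star (m.fst c)) (m.snd (E.ip x x) * c)
    _ ≤ ‖m‖ * ‖c‖ * ‖m.snd (E.ip x x) * c‖ := by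
        gcongr
        exact DoubleCentralizer.norm_fst m ▸ m.fst.le_opNorm c

theorem cauchy_map_rsmul_fst {l : Filter C} (hl : l.IsApproximateUnit)
    (hl_norm : ∀ᶠ c in l, ‖c‖ ≤ 1) (m : 𝓜(ℂ, C)) (x : E.carrier) :
    Cauchy (l.map fun c ↦ E.rsmul x (m.fst c)) := by
  refine cauchy_map_iff.mpr ⟨hl.neBot, ?_⟩
  rw [Metric.uniformity_eq_comap_nhds_zero, tendsto_comap_iff]
  set g := m.snd (E.ip x x)
  have sq_dist_le : ∀ᶠ p : C × C in l ×ˢ l,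
      dist (E.rsmul x (m.fst p.1)) (E.rsmul x (m.fst p.2)) ^ 2 ≤
        ‖m‖ * 2 * ‖g * p.1 - g * p.2‖ := by
    filter_upwards [hl_norm.prod_mk hl_norm] with p ⟨h₁, h₂⟩
    rw [dist_eq_norm, ← rsmul_sub, ← map_sub, ← mul_sub]
    refine (E.norm_rsmul_fst_sq_le m x _).trans ?_
    gcongr
    exact (norm_sub_le _ _).trans (by linarith)
  have bound_tendsto : Tendsto (fun p : C × C ↦ ‖m‖ * 2 * ‖g * p.1 - g * p.2‖) (l ×ˢ l) (𝓝 0) := by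
    simpa using (((hl.tendsto_mul_left g).comp tendsto_fst).sub
      ((hl.tendsto_mul_left g).comp tendsto_snd)).norm.const_mul (‖m‖ * 2)
  simpa [Function.comp_def, Real.sqrt_sq dist_nonneg] using
    (squeeze_zero' (.of_forall fun _ ↦ sq_nonneg _) sq_dist_le bound_tendsto).sqrt

theorem exists_ip_eq_snd (m : 𝓜(ℂ, C)) (x : E.carrier) :
    ∃ y, ∀ z, E.ip z y = m.snd (E.ip z x) := by
  let _ := CStarAlgebra.spectralOrder C
  have _ := CStarAlgebra.spectralOrderedRing C
  have hl := CStarAlgebra.increasingApproximateUnit C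
  have := hl.neBot
  obtain ⟨y, hy⟩ := CompleteSpace.complete
    (E.cauchy_map_rsmul_fst hl.toIsApproximateUnit hl.eventually_norm m x)
  refine ⟨y, fun z ↦ tendsto_nhds_unique (((E.continuous_ip_right z).tendsto y).comp hy) ?_⟩
  simpa only [Function.comp_def, ip_rsmul_right, ← m.central] using
    hl.tendsto_mul_left (m.snd (E.ip z x))

/-- The right action of the multiplier algebra `𝓜(ℂ, C)` on a Hilbert `C`-module. It is
characterised by `⟨z, x <• m⟩ = ⟨z, x⟩ m`, and `x <• m` is the limit of `x (m u)` along an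
approximate unit `u` of `C`. -/
noncomputable instance : SMul 𝓜(ℂ, C)ᵐᵒᵖ E.carrier :=
  ⟨fun m x ↦ (E.exists_ip_eq_snd m.unop x).choose⟩

theorem ip_op_smul_right (m : 𝓜(ℂ, C)) (z x : E.carrier) :
    E.ip z (x <• m) = m.snd (E.ip z x) :=
  (E.exists_ip_eq_snd m x).choose_spec z

theorem ip_op_smul_left (m : 𝓜(ℂ, C)) (x z : E.carrier) :
    E.ip (x <• m) z = (star m).fst (E.ip x z) := by
  rw [← E.ip_star, ip_op_smul_right, DoubleCentralizer.star_fst, E.ip_star]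

noncomputable instance : Module 𝓜(ℂ, C)ᵐᵒᵖ E.carrier where
  one_smul x := ext_ip fun z ↦ E.ip_op_smul_right 1 z x
  mul_smul m m' x := ext_ip fun z ↦ by
    induction m; induction m'
    simp only [← op_mul, ip_op_smul_right, DoubleCentralizer.mul_snd, mul_apply_eq_comp]
  smul_zero m := ext_ip fun z ↦ by
    induction m
    simp only [ip_op_smul_right, ip_zero_right, map_zero]
  smul_add m x y := ext_ip fun z ↦ by
    induction m
    simp only [ip_op_smul_right, E.ip_add_right, map_add]
  add_smul m m' x := ext_ip fun z ↦ by
    induction m; induction m'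
    simp only [← op_add, ip_op_smul_right, E.ip_add_right, DoubleCentralizer.add_snd, add_apply]
  zero_smul x := ext_ip fun z ↦ by
    rw [← op_zero, ip_op_smul_right, DoubleCentralizer.zero_snd, ip_zero_right, zero_apply]

instance : SMulCommClass 𝓜(ℂ, C)ᵐᵒᵖ ℂ E.carrier where
  smul_comm m c x := ext_ip fun z ↦ by
    induction m
    simp only [ip_op_smul_right, E.ip_smul_right, map_smul]

theorem norm_op_smul_le (m : 𝓜(ℂ, C)) (x : E.carrier) : ‖x <• m‖ ≤ ‖m‖ * ‖x‖ := by
  rcases (norm_nonneg (x <• m)).eq_or_lt with h | h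
  · rw [← h]
    positivity
  refine le_of_mul_le_mul_right ?_ h
  calc ‖x <• m‖ * ‖x <• m‖ = ‖m.snd (E.ip (x <• m) x)‖ := by
        rw [← sq, norm_sq_eq, ip_op_smul_right]
    _ ≤ ‖m‖ * ‖E.ip (x <• m) x‖ := DoubleCentralizer.norm_snd m ▸ m.snd.le_opNorm _
    _ ≤ ‖m‖ * (‖x <• m‖ * ‖x‖) := by
        gcongr
        exact E.norm_ip_le _ _
    _ = ‖m‖ * ‖x‖ * ‖x <• m‖ := by ring

instance : ContinuousConstSMul 𝓜(ℂ, C)ᵐᵒᵖ E.carrier where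
  continuous_const_smul m :=
    AddMonoidHomClass.continuous_of_bound (DistribSMul.toAddMonoidHom E.carrier m) ‖m.unop‖
      (E.norm_op_smul_le m.unop)

theorem lsmul_op_smul (r : R) (x : E.carrier) (m : 𝓜(ℂ, C)) :
    E.lsmul r (x <• m) = E.lsmul r x <• m :=
  ext_ip fun z ↦ by simp only [ip_lsmul_right, ip_op_smul_right]

theorem rsmul_op_smul (x : E.carrier) (c : C) (m : 𝓜(ℂ, C)) :
    E.rsmul x c <• m = E.rsmul x (m.snd c) :=
  ext_ip fun z ↦ by simp only [ip_op_smul_right, ip_rsmul_right, multiplier_snd_mul_apply]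

theorem op_smul_rsmul (x : E.carrier) (m : 𝓜(ℂ, C)) (c : C) :
    E.rsmul (x <• m) c = E.rsmul x (m.fst c) :=
  ext_ip fun z ↦ by simp only [ip_rsmul_right, ip_op_smul_right, m.central]

/-- The corner `E p` cut out of a Hilbert `C`-module `E` by a projection `p` in the multiplier
algebra of `C`, encoded as the space of vectors fixed by `p`. -/
noncomputable def corner (p : 𝓜(ℂ, C)) : Submodule ℂ E.carrier :=
  LinearMap.eqLocus (DistribSMul.toLinearMap ℂ E.carrier (op p)) LinearMap.id

variable {E} {p : 𝓜(ℂ, C)}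

theorem mem_corner {x : E.carrier} : x ∈ E.corner p ↔ x <• p = x :=
  Iff.rfl

theorem isClosed_corner : IsClosed (E.corner p : Set E.carrier) :=
  isClosed_eq (continuous_const_smul (op p)) continuous_id

theorem op_smul_mem_corner {m : 𝓜(ℂ, C)} (hm : m * p = m) (x : E.carrier) :
    x <• m ∈ E.corner p := by
  rw [mem_corner, ← mul_smul, ← op_mul, hm]

theorem rsmul_mem_corner {c : C} (hc : p.snd c = c) (x : E.carrier) :
    E.rsmul x c ∈ E.corner p := by
  rw [mem_corner, rsmul_op_smul, hc]

theorem lsmul_mem_corner {x : E.carrier} (hx : x ∈ E.corner p) (r : R) :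
    E.lsmul r x ∈ E.corner p := by
  rw [mem_corner, ← lsmul_op_smul, mem_corner.mp hx]

theorem snd_ip_of_mem_corner {x : E.carrier} (hx : x ∈ E.corner p) (z : E.carrier) :
    p.snd (E.ip z x) = E.ip z x := by
  rw [← ip_op_smul_right, mem_corner.mp hx]

theorem closure_span_lsmul_corner (hp : IsIdempotentElem p) :
    closure (Submodule.span ℂ {y : E.corner p | ∃ (r : R) (ξ : E.corner p),
      ⟨E.lsmul r ξ, lsmul_mem_corner ξ.2 r⟩ = y} : Set (E.corner p)) = Set.univ := by
  let compress : E.carrier →ₗ[ℂ] E.corner p :=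
    (DistribSMul.toLinearMap ℂ E.carrier (op p)).codRestrict _ (op_smul_mem_corner hp)
  have compress_continuous : Continuous compress :=
    (continuous_const_smul (op p)).subtype_mk _
  have compress_surjective : Function.Surjective compress := fun x ↦ ⟨x, Subtype.ext x.2⟩
  rw [← dense_iff_closure_eq]
  refine (compress_surjective.denseRange.dense_image compress_continuous
    (dense_iff_closure_eq.mpr E.nondegenerate)).mono ?_
  rw [← Submodule.map_coe, SetLike.coe_subset_coe, Submodule.map_span_le]
  rintro _ ⟨r, x, rfl⟩
  exact Submodule.subset_span ⟨r, compress x, Subtype.ext (E.lsmul_op_smul r x p)⟩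

end CStarCoefficients

end Correspondence

section MatrixAlgebra

theorem cstarMatrix_sum_apply {κ m n D : Type*} [AddCommMonoid D] (s : Finset κ)
    (M : κ → CStarMatrix m n D) (i : m) (j : n) : (∑ c ∈ s, M c) i j = ∑ c ∈ s, M c i j :=
  Matrix.sum_apply i j s M

theorem exists_star_mul_self_apply_self_eq {ι : Type*} [Fintype ι] [PartialOrder B]
    [StarOrderedRing B] (M : CStarMatrix ι ι B) (o : ι) :
    ∃ b, (star M * M) o o = star b * b := by
  rw [← CStarAlgebra.nonneg_iff_eq_star_mul_self, CStarMatrix.mul_apply]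
  exact Finset.sum_nonneg fun i _ ↦ star_mul_self_nonneg (M i o)

variable {ι : Type*} [Fintype ι] [DecidableEq ι]

/-- The embedding of `B` as the `(o, o)` corner of `Mat_ι(B)`. -/
def cornerEmbedding (o : ι) : B →⋆ₙₐ[ℂ] CStarMatrix ι ι B where
  toFun b := CStarMatrix.ofMatrix (Matrix.single o o b)
  map_smul' c b := (Matrix.smul_single c o o b).symm
  map_zero' := Matrix.single_zero o o
  map_add' b b' := Matrix.single_add o o b b'
  map_mul' b b' := (Matrix.single_mul_single_same b o o o b').symm
  map_star' b := (Matrix.conjTranspose_single o o b).symm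

theorem cornerEmbedding_apply (o : ι) (b : B) (k l : ι) :
    cornerEmbedding o b k l = if k = o ∧ l = o then b else 0 := by
  simp only [eq_comm (b := o)]
  exact Matrix.single_apply ..

theorem cornerEmbedding_injective (o : ι) : Function.Injective (cornerEmbedding (B := B) o) :=
  fun b b' h ↦ by simpa [cornerEmbedding_apply] using congrFun (congrFun h o) o

theorem mul_cornerEmbedding_apply_self (o : ι) (M : CStarMatrix ι ι B) (b : B) :
    (M * cornerEmbedding o b) o o = M o o * b := by
  simp [CStarMatrix.mul_apply, cornerEmbedding_apply]

variable [PartialOrder B] [StarOrderedRing B]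

variable (B) in
/-- The matrix unit `eᵢⱼ` as a multiplier of `Mat_ι(B)`; it belongs to `Mat_ι(B)` itself only when
`B` has a unit. -/
noncomputable def matrixUnit (i j : ι) : 𝓜(ℂ, CStarMatrix ι ι B) where
  fst := (.single ℂ (fun _ ↦ ι → B) i ∘L .proj j : (ι → ι → B) →L[ℂ] ι → ι → B)
  snd := (.pi fun k ↦ .single ℂ (fun _ ↦ B) j ∘L .proj i ∘L .proj k :
    (ι → ι → B) →L[ℂ] ι → ι → B)
  central M N := by
    ext k l
    simp only [CStarMatrix.mul_apply]
    change ∑ x, (Pi.single j (M k i) : ι → B) x * N x l =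
      ∑ x, M k x * (Pi.single i (N j) : ι → ι → B) x l
    simp [Pi.single_apply, ite_apply]

theorem matrixUnit_fst_apply (i j : ι) (M : CStarMatrix ι ι B) (k l : ι) :
    (matrixUnit B i j).fst M k l = if k = i then M j l else 0 := by
  change (Pi.single i (M j) : ι → ι → B) k l = _
  simp [Pi.single_apply, ite_apply]

theorem matrixUnit_snd_apply (i j : ι) (M : CStarMatrix ι ι B) (k l : ι) :
    (matrixUnit B i j).snd M k l = if l = j then M k i else 0 :=
  Pi.single_apply ..

theorem matrixUnit_mul_matrixUnit_same (i j k : ι) :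
    matrixUnit B i j * matrixUnit B j k = matrixUnit B i k :=
  multiplier_ext fun M ↦ by
    ext a b
    simp [DoubleCentralizer.mul_snd, matrixUnit_snd_apply]

theorem matrixUnit_mul_matrixUnit_of_ne (i : ι) {j k : ι} (h : j ≠ k) (l : ι) :
    matrixUnit B i j * matrixUnit B k l = 0 :=
  multiplier_ext fun M ↦ by
    ext a b
    simp [DoubleCentralizer.mul_snd, matrixUnit_snd_apply, h.symm]

theorem star_matrixUnit (i j : ι) :
    star (matrixUnit B i j) = matrixUnit B j i :=
  multiplier_ext fun M ↦ by
    ext a b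
    simp [DoubleCentralizer.star_snd, CStarMatrix.star_apply, matrixUnit_fst_apply,
      matrixUnit_snd_apply, apply_ite star]

theorem sum_matrixUnit_self : ∑ i : ι, matrixUnit B i i = 1 :=
  multiplier_ext fun M ↦ by
    ext a b
    simp [multiplier_snd_sum_apply, cstarMatrix_sum_apply, matrixUnit_snd_apply]

theorem norm_cornerEmbedding (o : ι) (b : B) : ‖cornerEmbedding o b‖ = ‖b‖ :=
  NonUnitalStarAlgHom.norm_map _ (cornerEmbedding_injective o) b

theorem snd_matrixUnit_fst_matrixUnit (o : ι) (M : CStarMatrix ι ι B) :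
    (matrixUnit B o o).snd ((matrixUnit B o o).fst M) = cornerEmbedding o (M o o) := by
  ext k l
  by_cases hl : l = o <;>
    simp [matrixUnit_fst_apply, matrixUnit_snd_apply, cornerEmbedding_apply, hl]

theorem snd_matrixUnit_cornerEmbedding (o : ι) (b : B) :
    (matrixUnit B o o).snd (cornerEmbedding o b) = cornerEmbedding o b := by
  ext k l
  by_cases hl : l = o <;> simp [matrixUnit_snd_apply, cornerEmbedding_apply, hl]

theorem snd_matrixUnit_eq_sum (i o : ι) (M : CStarMatrix ι ι B) :
    (matrixUnit B i o).snd M = ∑ j, (matrixUnit B j o).fst (cornerEmbedding o (M j i)) := by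
  ext k l
  simp [cstarMatrix_sum_apply, matrixUnit_fst_apply, matrixUnit_snd_apply, cornerEmbedding_apply,
    eq_comm]

end MatrixAlgebra

namespace Correspondence

section MatrixCoefficients

variable {R : Type u} [NonUnitalRing R] [StarRing R] [PartialOrder B] [StarOrderedRing B]
  {ι : Type} [Fintype ι] [DecidableEq ι] (E : Correspondence R (CStarMatrix ι ι B) fun M ↦ ‖M‖)

variable {E} in
theorem ip_eq_cornerEmbedding {o : ι} {x y : E.carrier} (hx : x ∈ E.corner (matrixUnit B o o))
    (hy : y ∈ E.corner (matrixUnit B o o)) : E.ip x y = cornerEmbedding o (E.ip x y o o) := by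
  rw [← snd_matrixUnit_fst_matrixUnit, ← star_matrixUnit o o, ← ip_op_smul_left, mem_corner.mp hx,
    star_matrixUnit, snd_ip_of_mem_corner hy]

/-- The corner `E eₒₒ` of a correspondence with coefficients in `Mat_ι(B)`, as a correspondence with
coefficients in `B ≅ eₒₒ Mat_ι(B) eₒₒ`. -/
noncomputable def cornerCorrespondence (o : ι) : Correspondence R B fun b ↦ ‖b‖ where
  carrier := E.corner (matrixUnit B o o)
  instComplete := isClosed_corner.completeSpace_coe
  lsmul r x := ⟨E.lsmul r x, lsmul_mem_corner x.2 r⟩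
  rsmul x b := ⟨E.rsmul x (cornerEmbedding o b),
    rsmul_mem_corner (E := E) (snd_matrixUnit_cornerEmbedding o b) x⟩
  ip x y := E.ip x y o o
  ip_add_right x y z := congrArg (· o o) (E.ip_add_right x y z)
  ip_smul_right c x y := congrArg (· o o) (E.ip_smul_right c x y)
  ip_rsmul_right x y b := by
    rw [E.ip_rsmul_right, mul_cornerEmbedding_apply_self]
  ip_star x y := congrArg (· o o) (E.ip_star x y)
  ip_nonneg x := by
    obtain ⟨M, hM⟩ := E.ip_nonneg x
    rw [hM]
    exact exists_star_mul_self_apply_self_eq M o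
  ip_definite x h := by
    refine Subtype.ext (E.ip_definite x ?_)
    rw [ip_eq_cornerEmbedding x.2 x.2, h, map_zero]
  norm_eq x := by
    rw [← norm_cornerEmbedding o, ← ip_eq_cornerEmbedding x.2 x.2]
    exact E.norm_eq x
  rsmul_add_left x y b := Subtype.ext (E.rsmul_add_left x y _)
  rsmul_add_right x b b' := Subtype.ext <| by
    simp only [map_add, E.rsmul_add_right, Submodule.coe_add]
  rsmul_rsmul x b b' := Subtype.ext <| by
    simp only [map_mul, E.rsmul_rsmul]
  lsmul_add r x y := Subtype.ext (E.lsmul_add r x y)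
  lsmul_smul r c x := Subtype.ext (E.lsmul_smul r c x)
  lsmul_add_left r r' x := Subtype.ext (E.lsmul_add_left r r' x)
  lsmul_lsmul r r' x := Subtype.ext (E.lsmul_lsmul r r' x)
  lsmul_bounded r := (E.lsmul_bounded r).imp fun _ hM x ↦ hM x
  ip_lsmul r x y := congrArg (· o o) (E.ip_lsmul r x y)
  lsmul_rsmul r x b := Subtype.ext (E.lsmul_rsmul r x _)
  nondegenerate := closure_span_lsmul_corner (matrixUnit_mul_matrixUnit_same o o o)

/-- The decomposition `x ↦ (x eᵢₒ)ᵢ` of a Hilbert `Mat_ι(B)`-module into copies of its corner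
`E eₒₒ`. -/
noncomputable def equivCornerPow (o : ι) : E.carrier ≃ₗ[ℂ] (ι → E.corner (matrixUnit B o o)) where
  toFun x i := ⟨x <• matrixUnit B i o, op_smul_mem_corner (matrixUnit_mul_matrixUnit_same i o o) x⟩
  map_add' x y := funext fun i ↦ Subtype.ext (smul_add (op (matrixUnit B i o)) x y)
  map_smul' c x := funext fun i ↦ Subtype.ext (smul_comm (op (matrixUnit B i o)) c x)
  invFun f := ∑ i, (f i : E.carrier) <• matrixUnit B o i
  left_inv x := by
    simp only [← mul_smul, ← op_mul, matrixUnit_mul_matrixUnit_same, ← Finset.sum_smul,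
      ← Finset.op_sum, sum_matrixUnit_self, op_one, one_smul]
  right_inv f := by
    ext i
    simp only [Finset.smul_sum, ← mul_smul, ← op_mul]
    rw [Finset.sum_eq_single i]
    · rw [matrixUnit_mul_matrixUnit_same]
      exact (f i).2
    · intro j _ hj
      rw [matrixUnit_mul_matrixUnit_of_ne o hj, op_zero, zero_smul]
    · simp

theorem ip_equivCornerPow (o : ι) (x y : E.carrier) (i j : ι) :
    (E.cornerCorrespondence o).ip (E.equivCornerPow o x i) (E.equivCornerPow o y j) =
      E.ip x y i j := by
  change E.ip (x <• matrixUnit B i o) (y <• matrixUnit B j o) o o = E.ip x y i j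
  simp [ip_op_smul_left, ip_op_smul_right, star_matrixUnit, matrixUnit_fst_apply,
    matrixUnit_snd_apply]

theorem equivCornerPow_lsmul (o : ι) (r : R) (x : E.carrier) (i : ι) :
    E.equivCornerPow o (E.lsmul r x) i =
      (E.cornerCorrespondence o).lsmul r (E.equivCornerPow o x i) :=
  Subtype.ext (E.lsmul_op_smul r x (matrixUnit B i o)).symm

theorem equivCornerPow_rsmul (o : ι) (x : E.carrier) (M : CStarMatrix ι ι B) (i : ι) :
    E.equivCornerPow o (E.rsmul x M) i =
      ∑ j, (E.cornerCorrespondence o).rsmul (E.equivCornerPow o x j) (M j i) := by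
  refine Subtype.ext (.trans ?_ (map_sum (E.corner (matrixUnit B o o)).subtype _ _).symm)
  change E.rsmul x M <• matrixUnit B i o =
    ∑ j, E.rsmul (x <• matrixUnit B j o) (cornerEmbedding o (M j i))
  simp only [rsmul_op_smul, snd_matrixUnit_eq_sum, rsmul_sum, op_smul_rsmul]

end MatrixCoefficients

/-- The same correspondence with its coefficients regarded in Mathlib's C*-algebra of matrices,
whose norm is `cstarMatNorm`. -/
noncomputable def toCStarMatrix {R : Type u} [NonUnitalRing R] [StarRing R] [PartialOrder B]
    [StarOrderedRing B] {n : ℕ} (E : Correspondence R (Matrix (Fin n) (Fin n) B) cstarMatNorm) :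
    Correspondence R (CStarMatrix (Fin n) (Fin n) B) fun M ↦ ‖M‖ :=
  { E with norm_eq := fun x ↦ (E.norm_eq x).trans (by rw [cstarMatNorm_eq_norm_ofMatrix]; rfl) }

end Correspondence

theorem correspondence_to_matrix_algebra_eq_power_general {R : Type u} [NonUnitalRing R]
    [StarRing R] (n : ℕ) (hn : 1 ≤ n)
    (E : Correspondence R (Matrix (Fin n) (Fin n) B) cstarMatNorm) :
    ∃ (F : Correspondence R B fun b => ‖b‖) (Ψ : E.carrier → (Fin n → F.carrier)),
      Function.Bijective Ψ ∧
        (∀ e e', Ψ (e + e') = Ψ e + Ψ e') ∧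
        (∀ (c : ℂ) e, Ψ (c • e) = c • Ψ e) ∧
        (∀ e e' (i j : Fin n), E.ip e e' i j = F.ip (Ψ e i) (Ψ e' j)) ∧
        (∀ (r : R) e (i : Fin n), Ψ (E.lsmul r e) i = F.lsmul r (Ψ e i)) ∧
        (∀ e (M : Matrix (Fin n) (Fin n) B) (i : Fin n),
          Ψ (E.rsmul e M) i = ∑ j, F.rsmul (Ψ e j) (M j i)) := by
  let _ := CStarAlgebra.spectralOrder B
  have _ := CStarAlgebra.spectralOrderedRing B
  let o : Fin n := ⟨0, hn⟩
  let E' := E.toCStarMatrix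
  let Ψ := E'.equivCornerPow o
  refine ⟨E'.cornerCorrespondence o, Ψ, Ψ.bijective, Ψ.map_add, Ψ.map_smul, ?_, ?_, ?_⟩
  · exact fun x y i j ↦ (E'.ip_equivCornerPow o x y i j).symm
  · exact E'.equivCornerPow_lsmul o
  · exact E'.equivCornerPow_rsmul o

/-- **Decomposition of correspondences into `Matₙ(B)`.** Every C*-correspondence `E`
from `A` to `Matₙ(B)` is unitarily equivalent to an `n`-fold direct sum `Fⁿ` of a
C*-correspondence `F` from `A` to `B`, equipped with the canonical matrix operations. -/
theorem correspondence_to_matrix_algebra_eq_power (n : ℕ) (hn : 1 ≤ n)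
    (E : Correspondence A (Matrix (Fin n) (Fin n) B) cstarMatNorm) :
    ∃ (F : Correspondence A B fun b => ‖b‖) (Ψ : E.carrier → (Fin n → F.carrier)),
      Function.Bijective Ψ ∧
        (∀ e e', Ψ (e + e') = Ψ e + Ψ e') ∧
        (∀ (c : ℂ) e, Ψ (c • e) = c • Ψ e) ∧
        -- (i) the `(i,j)` entry of `⟨e, e'⟩` is `⟨Ψ(e)ᵢ, Ψ(e')ⱼ⟩_B`
        (∀ e e' (i j : Fin n), E.ip e e' i j = F.ip (Ψ e i) (Ψ e' j)) ∧
        -- (ii) the left `A`-action is diagonal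
        (∀ (a : A) e (i : Fin n), Ψ (E.lsmul a e) i = F.lsmul a (Ψ e i)) ∧
        -- (iii) the right `Matₙ(B)`-action is matrix multiplication
        (∀ e (M : Matrix (Fin n) (Fin n) B) (i : Fin n),
          Ψ (E.rsmul e M) i = ∑ j, F.rsmul (Ψ e j) (M j i)) :=
  correspondence_to_matrix_algebra_eq_power_general n hn E

end Stmt14
end
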